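/- arXiv:1102.4122 — 4 statements merged into one kernel-verified Lean document; each statement's English description precedes it below -/
import Mathlib

section
/- For each integer n ≥ 12 there exists a system S ⊆ E_n such that S has infinitely many integer solutions and every integer solution (x_1,...,x_n) of S satisfies max(|x_1|,...,|x_n|) > 2^(2^(n-1)); that is, all integer solutions of S belong to ℤ^n \ [-2^(2^(n-1)), 2^(2^(n-1))]^n. -/
/-- A system of equations `S ⊆ E_n`: a set of equations of the forms
`x_i = 1`, `x_i + x_j = x_k`, `x_i * x_j = x_k` with `i, j, k ∈ {1, …, n}`. -/
structure EqnSystem (n : ℕ) where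
  ones : Set (Fin n)
  adds : Set (Fin n × Fin n × Fin n)
  muls : Set (Fin n × Fin n × Fin n)

/-- A tuple `x` solves the system `S` when it satisfies every equation of `S`. -/
def EqnSystem.Solves {n : ℕ} {R : Type*} [Add R] [Mul R] [One R]
    (S : EqnSystem n) (x : Fin n → R) : Prop :=
  (∀ i ∈ S.ones, x i = 1) ∧
  (∀ t ∈ S.adds, x t.1 + x t.2.1 = x t.2.2) ∧
  (∀ t ∈ S.muls, x t.1 * x t.2.1 = x t.2.2)

theorem fib_step (k : ℕ) :
    Nat.fib (6 * (k + 1) + 2) = 5 * Nat.fib (6 * k + 2) + 8 * Nat.fib (6 * k + 3) ∧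
    Nat.fib (6 * (k + 1) + 3) = 8 * Nat.fib (6 * k + 2) + 13 * Nat.fib (6 * k + 3) := by
  have h2 : Nat.fib (6*k+4) = _ := Nat.fib_add_two (n := 6*k+2)
  have h3 : Nat.fib (6*k+5) = _ := Nat.fib_add_two (n := 6*k+3)
  have h4 : Nat.fib (6*k+6) = _ := Nat.fib_add_two (n := 6*k+4)
  have h5 : Nat.fib (6*k+7) = _ := Nat.fib_add_two (n := 6*k+5)
  have h6 : Nat.fib (6*k+8) = _ := Nat.fib_add_two (n := 6*k+6)
  have h7 : Nat.fib (6*k+9) = _ := Nat.fib_add_two (n := 6*k+7)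
  simp only [add_assoc, Nat.reduceAdd] at h2 h3 h4 h5 h6 h7
  rw [show 6 * (k + 1) + 2 = 6 * k + 8 by ring, show 6 * (k + 1) + 3 = 6 * k + 9 by ring]
  omega

theorem pell_fib_aux (u : ℕ) : ∀ x : ℕ, x ^ 2 + 1 = 5 * u ^ 2 →
    ∃ k : ℕ, 2 * u = Nat.fib (6 * k + 3) ∧ x = Nat.fib (6 * k + 2) + u := by
  induction u using Nat.strong_induction_on with
  | _ u ih =>
    intro x hx
    by_cases hu : u < 5
    · have hx9 : x < 10 := by
        have : u ^ 2 ≤ 16 := by nlinarith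
        nlinarith
      have h1 : u = 1 ∧ x = 2 := by
        interval_cases u <;> interval_cases x <;> simp_all
      obtain ⟨rfl, rfl⟩ := h1
      exact ⟨0, by decide, by decide⟩
    · push Not at hu
      have a1 : 20 * u ≤ 9 * x := by
        by_contra h; push Not at h
        nlinarith
      have a2 : 4 * x ≤ 9 * u := by
        by_contra h; push Not at h
        nlinarith
      have a3 : 2 * u < x := by
        by_contra h; push Not at h
        nlinarith
      obtain ⟨x', hx'⟩ := Nat.exists_eq_add_of_le a1
      obtain ⟨u', hu'⟩ := Nat.exists_eq_add_of_le a2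
      have e1 : x = 9 * x' + 20 * u' := by omega
      have e2 : u = 9 * u' + 4 * x' := by omega
      obtain ⟨k, hk1, hk2⟩ := ih u' (by omega) x' (by subst e1; subst e2; nlinarith)
      have hs := fib_step k
      exact ⟨k + 1, by omega, by omega⟩

theorem pell_fib_conv (k : ℕ) : ∃ u x : ℕ, x ^ 2 + 1 = 5 * u ^ 2 ∧
    2 * u = Nat.fib (6 * k + 3) ∧ x = Nat.fib (6 * k + 2) + u := by
  induction k with
  | zero => exact ⟨1, 2, by decide, by decide, by decide⟩
  | succ k ih =>
    obtain ⟨u, x, h, h1, h2⟩ := ih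
    have hs := fib_step k
    exact ⟨9 * u + 4 * x, 9 * x + 20 * u, by nlinarith, by omega, by omega⟩

theorem fib_dvd_aux (m : ℕ) (h : 625 ∣ Nat.fib m) : 625 ∣ m := by
  have h1 : 625 ∣ Nat.fib 625 := by norm_num
  have h2 : 625 ∣ Nat.fib (Nat.gcd m 625) := by
    rw [Nat.fib_gcd]; exact Nat.dvd_gcd h h1
  have h3 : Nat.gcd m 625 ∣ 5 ^ 4 := Nat.gcd_dvd_right m 625
  obtain ⟨j, hj, hj'⟩ := (Nat.dvd_prime_pow (by norm_num)).1 h3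
  have h4 : Nat.gcd m 625 = 625 := by
    rw [hj'] at h2 ⊢
    interval_cases j <;> norm_num at h2 <;> norm_num
  rw [← h4]; exact Nat.gcd_dvd_left m 625

set_option exponentiation.threshold 4000 in
theorem pell_large (x y : ℕ) (h : x ^ 2 + 1 = 5 * (625 * y) ^ 2) :
    2 ^ 2 ^ 11 < x ^ 2 + 1 := by
  obtain ⟨k, h1, h2⟩ := pell_fib_aux _ x h
  have h3 : 625 ∣ 6 * k + 3 := fib_dvd_aux _ (by rw [← h1]; exact ⟨2 * y, by ring⟩)
  have h4 : 1875 ≤ 6 * k + 3 := by omega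
  have h5 := Nat.fib_mono h4
  rw [← h1] at h5
  have h6 : 2 ^ 1100 ≤ Nat.fib 1875 := by norm_num
  have h7 : 2 ^ 1100 ≤ 2 * (625 * y) := h6.trans h5
  have h8 : (2 ^ 1099) ^ 2 ≤ (625 * y) ^ 2 := by
    apply Nat.pow_le_pow_left
    have : 2 ^ 1100 = 2 * 2 ^ 1099 := by rw [← pow_succ']
    omega
  rw [← pow_mul] at h8
  have h9 : 2 ^ 2 ^ 11 < 2 ^ (1099 * 2) := Nat.pow_lt_pow_right (by norm_num) (by norm_num)
  rw [h]
  generalize 2 ^ (1099 * 2) = A at *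
  generalize 2 ^ 2 ^ 11 = B at *
  omega

/-- The solution of the system attached to `x, y`. -/
def solFun (x y : ℤ) : ℕ → ℤ
  | 0 => 1
  | 1 => 2
  | 2 => 4
  | 3 => 5
  | 4 => 25
  | 5 => 625
  | 6 => y
  | 7 => 625 * y
  | 8 => (625 * y) ^ 2
  | 9 => x
  | 10 => x ^ 2
  | (i + 11) => (x ^ 2 + 1) ^ 2 ^ i

/-- The system. -/
def bigSystem (n : ℕ) : EqnSystem n where
  ones := {i | i.val = 0}
  adds := {t | (t.1.val, t.2.1.val, t.2.2.val) ∈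
    [(0, 0, 1), (1, 1, 2), (2, 0, 3), (10, 0, 11)]}
  muls := {t | (t.1.val, t.2.1.val, t.2.2.val) ∈
    [(3, 3, 4), (4, 4, 5), (5, 6, 7), (7, 7, 8), (9, 9, 10), (3, 8, 11)] ∨
    (11 ≤ t.1.val ∧ t.2.1.val = t.1.val ∧ t.2.2.val = t.1.val + 1)}

theorem bigSystem_solves (n : ℕ) (x y : ℤ) (h : x ^ 2 + 1 = 5 * (625 * y) ^ 2) :
    (bigSystem n).Solves (fun i : Fin n => solFun x y i.val) := by
  refine ⟨?_, ?_, ?_⟩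
  · intro i hi
    have hi' : i.val = 0 := hi
    simp [hi', solFun]
  · rintro ⟨a, b, c⟩ ht
    simp only [bigSystem, Set.mem_setOf_eq, List.mem_cons, Prod.mk.injEq, List.not_mem_nil,
      or_false] at ht
    rcases ht with ⟨h1, h2, h3⟩ | ⟨h1, h2, h3⟩ | ⟨h1, h2, h3⟩ | ⟨h1, h2, h3⟩ <;>
      simp [h1, h2, h3, solFun]
  · rintro ⟨a, b, c⟩ ht
    simp only [bigSystem, Set.mem_setOf_eq, List.mem_cons, Prod.mk.injEq, List.not_mem_nil,
      or_false] at ht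
    rcases ht with (⟨h1, h2, h3⟩ | ⟨h1, h2, h3⟩ | ⟨h1, h2, h3⟩ | ⟨h1, h2, h3⟩ | ⟨h1, h2, h3⟩ |
      ⟨h1, h2, h3⟩) | ⟨h1, h2, h3⟩
    · simp [h1, h2, h3, solFun]
    · simp [h1, h2, h3, solFun]
    · simp [h1, h2, h3, solFun]
    · simp only [h1, h2, h3, solFun]; ring
    · simp only [h1, h2, h3, solFun]; ring
    · simp only [h1, h2, h3, solFun]; rw [← h]; ring
    · obtain ⟨i, hi⟩ := Nat.exists_eq_add_of_le' h1
      simp only [h2, h3, hi]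
      rw [show i + 11 + 1 = (i + 1) + 11 by ring]
      simp only [solFun]
      rw [← pow_add]; congr 1; ring

/-- For each integer `n ≥ 12` there exists a system `S ⊆ E_n` which has infinitely many
integer solutions, all of which lie outside the box `[-2^(2^(n-1)), 2^(2^(n-1))]^n`. -/
theorem small_system_with_only_large_solutions (n : ℕ) (hn : 12 ≤ n) :
    ∃ S : EqnSystem n,
      {x : Fin n → ℤ | S.Solves x}.Infinite ∧
      ∀ x : Fin n → ℤ, S.Solves x → ∃ i : Fin n, (2 : ℤ) ^ 2 ^ (n - 1) < |x i| := by
  refine ⟨bigSystem n, ?_, ?_⟩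
  · have key : ∀ j : ℕ, ∃ x y : ℕ, x ^ 2 + 1 = 5 * (625 * y) ^ 2 ∧
        1250 * y = Nat.fib (3750 * j + 1875) := by
      intro j
      obtain ⟨u, x, h, h1, -⟩ := pell_fib_conv (625 * j + 312)
      rw [show 6 * (625 * j + 312) + 3 = 3750 * j + 1875 by ring] at h1
      have d1 : 1250 ∣ Nat.fib 1875 := by norm_num
      have d2 : Nat.fib 1875 ∣ Nat.fib (3750 * j + 1875) :=
        Nat.fib_dvd _ _ ⟨2 * j + 1, by ring⟩
      obtain ⟨y, hy⟩ := d1.trans d2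
      have hu : u = 625 * y := by omega
      exact ⟨x, y, by rw [h, hu], hy.symm⟩
    choose X Y hXY hY using key
    refine Set.infinite_of_injective_forall_mem
      (f := fun j : ℕ => fun i : Fin n => solFun (X j) (Y j) i.val) ?_ ?_
    · intro a b hab
      have h6 := congrFun hab ⟨6, by omega⟩
      simp only [solFun] at h6
      have h7 : Y a = Y b := by exact_mod_cast h6
      have h8 : Nat.fib (3750 * a + 1875) = Nat.fib (3750 * b + 1875) := by
        rw [← hY, ← hY, h7]
      have h9 := Nat.fib_strictMonoOn.injOn (show 2 ≤ 3750 * a + 1875 by omega)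
        (show 2 ≤ 3750 * b + 1875 by omega) h8
      omega
    · intro j
      exact bigSystem_solves n _ _ (by exact_mod_cast hXY j)
  · rintro x ⟨h1, h2, h3⟩
    have e0 : x ⟨0, by omega⟩ = 1 := h1 _ rfl
    have e1 := h2 (⟨0, by omega⟩, ⟨0, by omega⟩, ⟨1, by omega⟩) (by simp [bigSystem])
    have e2 := h2 (⟨1, by omega⟩, ⟨1, by omega⟩, ⟨2, by omega⟩) (by simp [bigSystem])
    have e3 := h2 (⟨2, by omega⟩, ⟨0, by omega⟩, ⟨3, by omega⟩) (by simp [bigSystem])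
    have e4 := h2 (⟨10, by omega⟩, ⟨0, by omega⟩, ⟨11, by omega⟩) (by simp [bigSystem])
    have m1 := h3 (⟨3, by omega⟩, ⟨3, by omega⟩, ⟨4, by omega⟩) (by simp [bigSystem])
    have m2 := h3 (⟨4, by omega⟩, ⟨4, by omega⟩, ⟨5, by omega⟩) (by simp [bigSystem])
    have m3 := h3 (⟨5, by omega⟩, ⟨6, by omega⟩, ⟨7, by omega⟩) (by simp [bigSystem])
    have m4 := h3 (⟨7, by omega⟩, ⟨7, by omega⟩, ⟨8, by omega⟩) (by simp [bigSystem])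
    have m5 := h3 (⟨9, by omega⟩, ⟨9, by omega⟩, ⟨10, by omega⟩) (by simp [bigSystem])
    have m6 := h3 (⟨3, by omega⟩, ⟨8, by omega⟩, ⟨11, by omega⟩) (by simp [bigSystem])
    simp only at e1 e2 e3 e4 m1 m2 m3 m4 m5 m6
    rw [e0] at e1 e3 e4
    rw [← e1] at e2
    rw [← e2] at e3
    rw [← e3] at m1 m6
    rw [← m1] at m2
    rw [← m2] at m3
    rw [← m3] at m4
    rw [← m4, ← e4, ← m5] at m6
    rw [← m5] at e4
    have main : (2 : ℤ) ^ 2 ^ 11 < x ⟨11, by omega⟩ := by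
      have hp : (x ⟨9, by omega⟩).natAbs ^ 2 + 1 =
          5 * (625 * (x ⟨6, by omega⟩).natAbs) ^ 2 := by
        zify
        rw [mul_pow, sq_abs, sq_abs]
        linarith
      have hl := pell_large _ _ hp
      zify at hl
      rw [sq_abs] at hl
      rw [← e4, ← sq]
      exact hl
    have chain : ∀ i : ℕ, ∀ hi : i + 11 < n, (2 : ℤ) ^ 2 ^ (i + 11) < x ⟨i + 11, hi⟩ := by
      intro i
      induction i with
      | zero => intro hi; exact main
      | succ i ih =>
        intro hi
        have hh := ih (by omega)
        have m := h3 (⟨i + 11, by omega⟩, ⟨i + 11, by omega⟩, ⟨i + 1 + 11, hi⟩)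
          (Or.inr ⟨by simp, rfl, by simp⟩)
        simp only at m
        rw [← m, show i + 1 + 11 = (i + 11) + 1 by ring, pow_succ 2 (i + 11), pow_mul, sq]
        have hpos : (0 : ℤ) < 2 ^ 2 ^ (i + 11) := by positivity
        exact mul_self_lt_mul_self hpos.le hh
    refine ⟨⟨(n - 12) + 11, by omega⟩, ?_⟩
    have hc := chain (n - 12) (by omega)
    rw [show n - 1 = n - 12 + 11 by omega]
    exact lt_of_lt_of_le hc (le_abs_self _)
end

section
/- For every computable function f : ℕ → ℕ there exists a positive integer m(f) such that for every integer n ≥ m(f) there exists a system S ⊆ E_n with the properties: S has infinitely many integer solutions, and every integer tuple (x_1,...,x_n) that solves S satisfies x_1 = f(n). -/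
namespace DPRM
open Nat

/-- Binomial coefficients as digits in base `u`. -/
theorem choose_digit (n k : ℕ) :
    n.choose k = ((2 ^ (n + 1) + 1) ^ n / (2 ^ (n + 1)) ^ k) % 2 ^ (n + 1) := by
  generalize hu : 2 ^ (n + 1) = u
  have hu0 : 0 < u := by rw [← hu]; positivity
  have hc : ∀ j, n.choose j < u := by
    intro j
    have := Nat.choose_le_two_pow n j
    rw [← hu, pow_succ]
    have := Nat.pos_of_ne_zero (pow_ne_zero n (two_ne_zero : (2:ℕ) ≠ 0))
    omega
  have low : ∀ k, ∑ j ∈ Finset.range k, u ^ j * n.choose j < u ^ k := by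
    intro k
    induction k with
    | zero => simp
    | succ k ih =>
      rw [Finset.sum_range_succ, pow_succ]
      have h1 := hc k
      have : u ^ k * (n.choose k + 1) ≤ u ^ k * u := Nat.mul_le_mul_left _ h1
      rw [mul_add] at this
      omega
  rcases lt_or_ge n k with h | h
  · rw [Nat.choose_eq_zero_of_lt h]
    have : (u + 1) ^ n < u ^ k := by
      refine lt_of_lt_of_le ?_ (Nat.pow_le_pow_right hu0 (show n + 1 ≤ k from h))
      have := low (n + 1)
      rw [add_pow]
      simpa using this
    rw [Nat.div_eq_of_lt this, Nat.zero_mod]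
  · obtain ⟨m, rfl⟩ := Nat.exists_eq_add_of_le h
    have e : (u + 1) ^ (k + m) = (∑ j ∈ Finset.range k, u ^ j * (k + m).choose j)
        + u ^ k * ((k + m).choose k +
          u * ∑ j ∈ Finset.range m, u ^ j * (k + m).choose (k + 1 + j)) := by
      rw [add_pow]
      simp only [one_pow, mul_one]
      rw [show k + m + 1 = k + (m + 1) by ring, Finset.sum_range_add _ k (m + 1),
        Finset.sum_range_succ']
      congr 1
      rw [mul_add, Finset.mul_sum, Finset.mul_sum, add_comm]
      congr 1
      refine Finset.sum_congr rfl fun j _ => ?_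
      rw [show k + (j + 1) = k + 1 + j by ring]
      push_cast
      rw [pow_add, pow_succ]; ring
    rw [e, Nat.add_mul_div_left _ _ (by positivity), Nat.div_eq_of_lt (low k), zero_add,
      Nat.add_mul_mod_self_left, Nat.mod_eq_of_lt (hc k)]

theorem factorial_div (n : ℕ) :
    n ! = ((n + 2) ^ (n + 4)) ^ n / ((n + 2) ^ (n + 4)).choose n := by
  generalize hr : (n + 2) ^ (n + 4) = r
  have hb : n ! + 1 ≤ (n + 2) ^ (n + 1) := by
    have h1 : n ! ≤ n ^ n := Nat.factorial_le_pow n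
    have h2 : n ^ n ≤ (n + 2) ^ n := Nat.pow_le_pow_left (by omega) n
    have h3 : 0 < (n + 2) ^ n := by positivity
    rw [pow_succ]; nlinarith
  have hbig : (n ! + 1) * (n * n) < r := by
    rw [← hr, show (n + 2) ^ (n + 4) = (n + 2) ^ (n + 1) * (n + 2) ^ 2 * (n + 2) by ring]
    have h3 : 0 < (n + 2) ^ (n + 1) := by positivity
    have : (n ! + 1) * (n * n) ≤ (n + 2) ^ (n + 1) * (n + 2) ^ 2 :=
      Nat.mul_le_mul hb (by nlinarith)
    have h4 : 0 < (n + 2) ^ (n + 1) * (n + 2) ^ 2 := by positivity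
    calc (n ! + 1) * (n * n) < (n + 2) ^ (n + 1) * (n + 2) ^ 2 * 2 := by omega
      _ ≤ _ := Nat.mul_le_mul_left _ (by omega)
  have hnr : n ≤ r := by
    rcases Nat.eq_zero_or_pos n with h | h
    · omega
    · nlinarith [Nat.factorial_pos n]
  have hd : (n ! * r.choose n) ≤ r ^ n := by
    rw [← Nat.descFactorial_eq_factorial_mul_choose]; exact Nat.descFactorial_le_pow _ _
  have hd2 : r ^ n < (n ! + 1) * r.choose n := by
    rcases Nat.eq_zero_or_pos n with h | h
    · subst h; simp
    have key : r ^ n ≤ r.descFactorial n + n * n * r ^ (n - 1) := by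
      have h1 : (r - n) ^ n ≤ r.descFactorial n :=
        (Nat.pow_le_pow_left (by omega) n).trans (Nat.pow_sub_le_descFactorial r n)
      have h2 : r ^ n ≤ (r - n) ^ n + n * n * r ^ (n - 1) := by
        obtain ⟨s, rfl⟩ := Nat.exists_eq_add_of_le hnr
        rw [Nat.add_sub_cancel_left]
        clear * -
        have gen : ∀ m, (n + s) ^ (m+1) ≤ s ^ (m+1) + (m+1) * n * (n + s) ^ m := by
          intro m
          induction m with
          | zero => simp; omega
          | succ m ih =>
            have : s ^ (m+1) ≤ (n + s) ^ (m+1) := Nat.pow_le_pow_left (by omega) _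
            calc (n+s)^(m+1+1) = (n + s) * (n+s)^(m+1) := by ring
              _ ≤ s * (s ^ (m+1) + (m+1) * n * (n + s) ^ m) + n * (n+s)^(m+1) := by
                  rw [add_mul, add_comm]; gcongr
              _ ≤ s ^ (m+2) + (m+1) * n * ((n+s) * (n + s) ^ m) + n * (n+s)^(m+1) := by
                  have : s * ((m+1) * n * (n + s) ^ m) ≤ (m+1) * n * ((n+s) * (n + s) ^ m) := by
                    have : s ≤ n + s := by omega
                    calc s * ((m+1) * n * (n + s) ^ m) ≤ (n+s) * ((m+1) * n * (n + s) ^ m) := by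
                          gcongr
                      _ = _ := by ring
                  rw [mul_add]
                  have e : s * s ^ (m+1) = s ^ (m+2) := by ring
                  omega
              _ = _ := by ring
        rcases n with _ | n
        · simp
        · simpa using gen n
      omega
    have hlt : (n ! + 1) * (n * n * r ^ (n-1)) < r ^ n := by
      have : 0 < r ^ (n-1) := Nat.pow_pos (by omega)
      calc (n ! + 1) * (n * n * r ^ (n-1)) = ((n ! + 1) * (n * n)) * r ^ (n-1) := by ring
        _ < r * r ^ (n-1) := Nat.mul_lt_mul_of_pos_right hbig this
        _ = r ^ n := by rw [← _root_.pow_succ']; congr 1; omega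
    rw [Nat.descFactorial_eq_factorial_mul_choose] at key
    have hf := Nat.factorial_pos n
    by_contra hcon
    push Not at hcon
    have k2 := Nat.mul_le_mul_left (n ! + 1) key
    have k3 := Nat.mul_le_mul_left (n !) hcon
    nlinarith
  have hcpos : 0 < r.choose n := Nat.choose_pos hnr
  symm
  rw [Nat.div_eq_iff hcpos]
  constructor
  · exact hd
  · rw [add_mul, one_mul] at hd2
    omega

end DPRM

namespace DPRM
open Nat

theorem moduli {Q y N : ℕ} (hy : y ≤ Q) (hQ : 3 ≤ Q) (hN : N + 1 = Q ! * Q !) :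
    ∃ m : ℕ → ℕ, (∀ k < y, N = k + (k + 1) * m k) ∧ (∀ k < y, 1 < m k) ∧
      (∀ k < y, ∀ p, p.Prime → p ∣ m k → Q < p) ∧
      (∀ k < y, ∀ l < y, k ≠ l → Nat.Coprime (m k) (m l)) ∧
      N.choose y = ∏ k ∈ Finset.range y, m k := by
  have hQf : 6 ≤ Q ! := by
    have := Nat.factorial_le hQ
    simpa [Nat.factorial] using this
  let m : ℕ → ℕ := fun k => Q ! / (k + 1) * (Q !) - 1
  have hm : ∀ k < y, (m k + 1) = Q ! / (k + 1) * Q ! ∧ 1 < m k ∧ N = k + (k + 1) * m k := by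
    intro k hk
    have hd : (k + 1) ∣ Q ! := Nat.dvd_factorial (by omega) (by omega)
    obtain ⟨c, hc⟩ := hd
    have hc0 : 0 < c := by
      rcases Nat.eq_zero_or_pos c with h | h
      · subst h; omega
      · exact h
    have e : Q ! / (k + 1) = c := by rw [hc]; exact Nat.mul_div_cancel_left _ (by omega)
    have h6 : 6 ≤ c * Q ! := by nlinarith
    have e1 : m k = c * (Q !) - 1 := by simp only [m, e]
    refine ⟨by rw [e1, e]; omega, by omega, ?_⟩
    have e2 : m k + 1 = c * Q ! := by omega
    have e3 : (k + 1) * (m k + 1) = N + 1 := by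
      rw [e2, hN, ← mul_assoc, ← hc]
    rw [mul_add] at e3; omega
  have hp : ∀ k < y, ∀ p, p.Prime → p ∣ m k → Q < p := by
    intro k hk p pp hpm
    by_contra hcon
    have h1 : p ∣ Q ! := Nat.dvd_factorial pp.pos (by omega)
    have h2 : p ∣ m k + 1 := by rw [(hm k hk).1]; exact Dvd.dvd.mul_left h1 _
    have : p ∣ 1 := (Nat.dvd_add_right hpm).1 h2
    exact pp.one_lt.ne' (Nat.dvd_one.1 this)
  refine ⟨m, fun k hk => (hm k hk).2.2, fun k hk => (hm k hk).2.1, hp, ?_, ?_⟩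
  · have key : ∀ k < y, ∀ l < y, k < l → Nat.Coprime (m k) (m l) := by
      intro k hk l hl hkl
      refine Nat.coprime_of_dvd fun p pp h1 h2 => ?_
      have hQp := hp k hk p pp h1
      have e1 := (hm k hk).2.2
      have e2 := (hm l hl).2.2
      have h3 : p ∣ (k + 1) * m k := Dvd.dvd.mul_left h1 _
      have h4 : p ∣ (l + 1) * m l := Dvd.dvd.mul_left h2 _
      have h5 : (k + 1) * m k = (l - k) + (l + 1) * m l := by omega
      rw [h5] at h3
      have h6 : p ∣ l - k := (Nat.dvd_add_left h4).1 h3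
      have := Nat.le_of_dvd (by omega) h6
      omega
    intro k hk l hl hkl
    rcases lt_or_gt_of_ne hkl with h | h
    · exact key k hk l hl h
    · exact (key l hl k hk h).symm
  · have h1 := Nat.descFactorial_eq_factorial_mul_choose N y
    rw [Nat.descFactorial_eq_prod_range] at h1
    have h2 : ∏ i ∈ Finset.range y, (N - i) = ∏ i ∈ Finset.range y, ((i + 1) * m i) := by
      refine Finset.prod_congr rfl fun i hi => ?_
      have := (hm i (Finset.mem_range.1 hi)).2.2
      omega
    rw [h2, Finset.prod_mul_distrib, Finset.prod_range_add_one_eq_factorial] at h1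
    exact (Nat.eq_of_mul_eq_mul_left (Nat.factorial_pos y) h1).symm

theorem poly_congr {γ : Type} (p : Poly γ) {m : ℕ} {x z : γ → ℕ}
    (h : ∀ i, x i ≡ z i [MOD m]) : p x ≡ p z [ZMOD m] := by
  induction p using Poly.induction with
  | H1 i => simpa using (Int.natCast_modEq_iff.2 (h i))
  | H2 n => simp
  | H3 f g hf hg => simpa using hf.sub hg
  | H4 f g hf hg => simpa using hf.mul hg

theorem poly_bound {γ : Type} (p : Poly γ) :
    ∃ b : Poly γ, ∀ x z : γ → ℕ, (∀ i, x i ≤ z i) → |p x| ≤ b z := by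
  induction p using Poly.induction with
  | H1 i => exact ⟨Poly.proj i, fun x z h => by simpa using h i⟩
  | H2 n => exact ⟨Poly.const |n|, fun x z h => by simp⟩
  | H3 f g hf hg =>
    obtain ⟨a, ha⟩ := hf
    obtain ⟨b, hb⟩ := hg
    refine ⟨a + b, fun x z h => ?_⟩
    have := abs_sub (f x) (g x)
    have h1 := ha x z h
    have h2 := hb x z h
    simp only [Poly.sub_apply, Poly.add_apply]
    linarith
  | H4 f g hf hg =>
    obtain ⟨a, ha⟩ := hf
    obtain ⟨b, hb⟩ := hg
    refine ⟨a * b, fun x z h => ?_⟩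
    simp only [Poly.mul_apply, abs_mul]
    exact mul_le_mul (ha x z h) (hb x z h) (abs_nonneg _) ((abs_nonneg _).trans (ha x z h))

theorem core {α β : Type} [Fintype β] (p b : Poly (Option α ⊕ β))
    (hb : ∀ x z : Option α ⊕ β → ℕ, (∀ i, x i ≤ z i) → |p x| ≤ b z) (v : α → ℕ) (y : ℕ) :
    (∀ k < y, ∃ t : β → ℕ, p (Sum.elim (Option.elim' k v) t) = 0) ↔
    ∃ (a : β → ℕ) (u N Q : ℕ),
      Q = (b (Sum.elim (Option.elim' y v) (fun _ => u))).natAbs + u + y + 3 ∧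
      N + 1 = Q ! * Q ! ∧ (∀ i, N.choose y ∣ (a i).choose (u + 1)) ∧
      N.choose y ∣ (p (Sum.elim (Option.elim' N v) a)).natAbs := by
  constructor
  · intro H
    choose! t ht using H
    obtain ⟨u, hu⟩ : ∃ u, ∀ k < y, ∀ i, t k i ≤ u := by
      refine ⟨∑ k ∈ Finset.range y, ∑ i, t k i, fun k hk i => ?_⟩
      exact (Finset.single_le_sum (f := fun i => t k i) (fun _ _ => Nat.zero_le _)
        (Finset.mem_univ i)).trans
        (Finset.single_le_sum (f := fun k => ∑ i, t k i) (fun _ _ => Nat.zero_le _)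
          (Finset.mem_range.2 hk))
    obtain ⟨Q, hQ⟩ : ∃ Q, Q = (b (Sum.elim (Option.elim' y v) (fun _ => u))).natAbs + u + y + 3 :=
      ⟨_, rfl⟩
    obtain ⟨N, hN⟩ : ∃ N, N + 1 = Q ! * Q ! :=
      ⟨Q ! * (Q !) - 1, Nat.sub_add_cancel (Nat.mul_pos (Nat.factorial_pos Q) (Nat.factorial_pos Q))⟩
    obtain ⟨m, m1, m2, m3, m4, m5⟩ := moduli (y := y) (by omega) (by omega) hN
    have hcrt : ∀ i : β, ∃ a, ∀ k < y, a ≡ t k i [MOD m k] := by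
      intro i
      obtain ⟨a, ha⟩ := Nat.chineseRemainderOfFinset (fun k => t k i) m (Finset.range y)
        (fun k hk => by have := m2 k (Finset.mem_range.1 hk); omega)
        (fun k hk l hl hkl => m4 k (by simpa using hk) l (by simpa using hl) hkl)
      exact ⟨a, fun k hk => ha k (Finset.mem_range.2 hk)⟩
    choose a ha using hcrt
    have prodvd : ∀ z, (∀ k < y, m k ∣ z) → N.choose y ∣ z := by
      intro z hz
      rw [m5]
      refine Finset.prod_dvd_of_isRelPrime ?_ (fun k hk => hz k (Finset.mem_range.1 hk))
      intro k hk l hl hkl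
      exact Nat.coprime_iff_isRelPrime.1 (m4 k (by simpa using hk) l (by simpa using hl) hkl)
    refine ⟨a, u, N, Q, hQ, hN, fun i => prodvd _ fun k hk => ?_, prodvd _ fun k hk => ?_⟩
    · have hc : Nat.Coprime (m k) (u + 1)! := by
        refine Nat.coprime_of_dvd fun p pp h1 h2 => ?_
        have := m3 k hk p pp h1
        have := (pp.dvd_factorial).1 h2
        omega
      refine hc.dvd_of_dvd_mul_left ?_
      rw [← Nat.descFactorial_eq_factorial_mul_choose]
      rcases le_or_gt (a i) u with h | h
      · rw [Nat.descFactorial_eq_zero_iff_lt.2 (by omega)]; exact dvd_zero _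
      · rw [Nat.descFactorial_eq_prod_range]
        have h1 := hu k hk i
        refine dvd_trans ?_ (Finset.dvd_prod_of_mem _ (Finset.mem_range.2 (show t k i < u + 1 by omega)))
        exact (Nat.modEq_iff_dvd' (by omega)).1 (ha i k hk).symm
    · have h1 := poly_congr p (m := m k) (x := Sum.elim (Option.elim' N v) a)
        (z := Sum.elim (Option.elim' k v) (t k)) (by
          rintro ((_ | j) | i)
          · simp only [Sum.elim_inl, Option.elim'_none]
            rw [m1 k hk]
            simp [Nat.ModEq]
          · rfl
          · exact ha i k hk)
      rw [ht k hk] at h1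
      exact Int.natCast_dvd.1 (Int.modEq_zero_iff_dvd.1 h1)
  · rintro ⟨a, u, N, Q, hQ, hN, h1, h2⟩ k hk
    obtain ⟨m, m1, m2, m3, m4, m5⟩ := moduli (y := y) (by omega) (by omega) hN
    obtain ⟨q, pq, hq⟩ := Nat.exists_prime_and_dvd (m2 k hk).ne'
    have hQq := m3 k hk q pq hq
    have hqM : q ∣ N.choose y := by
      rw [m5]; exact hq.trans (Finset.dvd_prod_of_mem _ (Finset.mem_range.2 hk))
    have hx : ∀ i, ∃ x ≤ u, a i ≡ x [MOD q] := by
      intro i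
      have h3 : q ∣ (a i).descFactorial (u + 1) := by
        rw [Nat.descFactorial_eq_factorial_mul_choose]
        exact Dvd.dvd.mul_left (hqM.trans (h1 i)) _
      rw [Nat.descFactorial_eq_prod_range, pq.prime.dvd_finsetProd_iff] at h3
      obtain ⟨j, hj, hd⟩ := h3
      rw [Finset.mem_range] at hj
      rcases le_or_gt (a i) u with h | h
      · exact ⟨a i, h, rfl⟩
      · exact ⟨j, by omega, ((Nat.modEq_iff_dvd' (by omega)).2 hd).symm⟩
    choose x hxu hx using hx
    refine ⟨x, ?_⟩
    have hc := poly_congr p (m := q) (x := Sum.elim (Option.elim' N v) a)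
        (z := Sum.elim (Option.elim' k v) x) (by
          rintro ((_ | j) | i)
          · simp only [Sum.elim_inl, Option.elim'_none]
            rw [m1 k hk]
            have : q ∣ (k + 1) * m k := Dvd.dvd.mul_left hq _
            obtain ⟨c, hc⟩ := this
            rw [hc]
            simp [Nat.ModEq]
          · rfl
          · exact hx i)
    have hd : (q : ℤ) ∣ p (Sum.elim (Option.elim' N v) a) := Int.natCast_dvd.2 (hqM.trans h2)
    have hd2 : (q : ℤ) ∣ p (Sum.elim (Option.elim' k v) x) :=
      Int.modEq_zero_iff_dvd.1 (hc.symm.trans (Int.modEq_zero_iff_dvd.2 hd))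
    refine Int.eq_zero_of_abs_lt_dvd hd2 ?_
    have := hb (Sum.elim (Option.elim' k v) x) (Sum.elim (Option.elim' y v) (fun _ => u)) (by
          rintro ((_ | j) | i)
          · simpa using hk.le
          · rfl
          · exact hxu i)
    omega

end DPRM

namespace DPRM
open Nat Dioph Fin2 Sum Vector3
open scoped Vector3 Dioph

theorem choose_dioph {α : Type} {f g : (α → ℕ) → ℕ} (df : DiophFn f) (dg : DiophFn g) :
    DiophFn fun v => (f v).choose (g v) := by
  have d2 : DiophFn fun v : α → ℕ => 2 ^ (f v + 1) :=
    pow_dioph (const_dioph 2) (add_dioph df (const_dioph 1))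
  have := mod_dioph (div_dioph (pow_dioph (add_dioph d2 (const_dioph 1)) df) (pow_dioph d2 dg)) d2
  convert this using 2 with v
  exact choose_digit (f v) (g v)

theorem factorial_dioph {α : Type} {f : (α → ℕ) → ℕ} (df : DiophFn f) :
    DiophFn fun v => (f v)! := by
  have dr : DiophFn fun v : α → ℕ => (f v + 2) ^ (f v + 4) :=
    pow_dioph (add_dioph df (const_dioph 2)) (add_dioph df (const_dioph 4))
  have := div_dioph (pow_dioph dr df) (choose_dioph dr df)
  convert this using 2 with v
  exact factorial_div (f v)

theorem finite_dummies {α : Type} {S : Set (α → ℕ)} (d : Dioph S) :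
    ∃ (β : Type) (_ : Fintype β) (p : Poly (α ⊕ β)),
      ∀ v, v ∈ S ↔ ∃ t, p (Sum.elim v t) = 0 := by
  classical
  obtain ⟨β, p, hp⟩ := d
  have key : ∃ (s : Finset β) (q : Poly (α ⊕ s)), ∀ x : α ⊕ β → ℕ,
      p x = q (x ∘ Sum.map id Subtype.val) := by
    clear hp
    have two : ∀ (s t : Finset β) (f : Poly (α ⊕ s)) (g : Poly (α ⊕ t)),
        ∃ (f' g' : Poly (α ⊕ (s ∪ t : Finset β))), (∀ x : α ⊕ β → ℕ,
          f (x ∘ Sum.map id Subtype.val) = f' (x ∘ Sum.map id Subtype.val)) ∧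
          (∀ x : α ⊕ β → ℕ,
          g (x ∘ Sum.map id Subtype.val) = g' (x ∘ Sum.map id Subtype.val)) := by
      intro s t f g
      refine ⟨f.map (Sum.map id fun i => ⟨i.1, Finset.mem_union_left _ i.2⟩),
        g.map (Sum.map id fun i => ⟨i.1, Finset.mem_union_right _ i.2⟩), fun x => ?_, fun x => ?_⟩
      · rw [Poly.map_apply]; congr 1; ext (i | i) <;> rfl
      · rw [Poly.map_apply]; congr 1; ext (i | i) <;> rfl
    induction p using Poly.induction with
    | H1 i =>
      rcases i with i | i
      · exact ⟨∅, Poly.proj (inl i), fun x => by simp⟩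
      · exact ⟨{i}, Poly.proj (inr ⟨i, by simp⟩), fun x => by simp⟩
    | H2 n => exact ⟨∅, Poly.const n, fun x => by simp⟩
    | H3 f g hf hg =>
      obtain ⟨s, f, hf⟩ := hf
      obtain ⟨t, g, hg⟩ := hg
      obtain ⟨f', g', h1, h2⟩ := two s t f g
      exact ⟨s ∪ t, f' - g', fun x => by simp [hf, hg, h1, h2]⟩
    | H4 f g hf hg =>
      obtain ⟨s, f, hf⟩ := hf
      obtain ⟨t, g, hg⟩ := hg
      obtain ⟨f', g', h1, h2⟩ := two s t f g
      exact ⟨s ∪ t, f' * g', fun x => by simp [hf, hg, h1, h2]⟩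
  obtain ⟨s, q, hq⟩ := key
  refine ⟨s, inferInstance, q, fun v => (hp v).trans ⟨?_, ?_⟩⟩
  · rintro ⟨t, ht⟩
    refine ⟨t ∘ Subtype.val, ?_⟩
    rw [hq] at ht
    rw [← ht]; congr 1; ext (i | i) <;> rfl
  · rintro ⟨t, ht⟩
    refine ⟨fun i => if h : i ∈ s then t ⟨i, h⟩ else 0, ?_⟩
    rw [hq, ← ht]; congr 1; ext (i | i)
    · rfl
    · simp

theorem forall_fintype_dioph {α ι : Type} [Fintype ι] {S : ι → Set (α → ℕ)}
    (d : ∀ i, Dioph (S i)) : Dioph {v | ∀ i, v ∈ S i} := by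
  have := DiophList.forall ((Finset.univ : Finset ι).toList.map S) (by
    rw [List.forall_iff_forall_mem]
    intro T hT
    obtain ⟨i, _, rfl⟩ := List.mem_map.1 hT
    exact d i)
  refine this.ext fun v => ?_
  simp [List.forall_iff_forall_mem]

/-- The bounded universal quantifier theorem. -/
theorem ball_dioph {α : Type} {S : Set (Option α → ℕ)} (d : Dioph S) {f : (α → ℕ) → ℕ}
    (df : DiophFn f) : Dioph {v : α → ℕ | ∀ k < f v, Option.elim' k v ∈ S} := by
  obtain ⟨β, _, p, hp⟩ := finite_dummies d
  obtain ⟨b, hb⟩ := poly_bound p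
  -- new variables: the `β`-tuple `a`, and `u`, `N`, `Q`, `y`
  let γ := α ⊕ (β ⊕ Fin 4)
  have dv : ∀ j : Fin 4, DiophFn fun w : γ → ℕ => w (inr (inr j)) := fun j => proj_dioph _
  have d1 : Dioph {w : γ → ℕ | f (w ∘ inl) = w (inr (inr 3))} :=
    eq_dioph (reindex_diophFn inl df) (dv 3)
  let gb : Option α ⊕ β → γ :=
    Sum.elim (Option.elim' (inr (inr 3)) inl) (fun _ => inr (inr 0))
  let gp : Option α ⊕ β → γ :=
    Sum.elim (Option.elim' (inr (inr 1)) inl) (fun i => inr (inl i))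
  have d2 : Dioph {w : γ → ℕ | w (inr (inr 2)) =
      (b.map gb w).natAbs + w (inr (inr 0)) + w (inr (inr 3)) + 3} :=
    eq_dioph (dv 2) (add_dioph (add_dioph (add_dioph (abs_poly_dioph _) (dv 0)) (dv 3))
      (const_dioph 3))
  have d3 : Dioph {w : γ → ℕ | w (inr (inr 1)) + 1 = (w (inr (inr 2)))! * (w (inr (inr 2)))!} :=
    eq_dioph (add_dioph (dv 1) (const_dioph 1))
      (mul_dioph (factorial_dioph (dv 2)) (factorial_dioph (dv 2)))
  have dM : DiophFn fun w : γ → ℕ => (w (inr (inr 1))).choose (w (inr (inr 3))) :=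
    choose_dioph (dv 1) (dv 3)
  have d4 : Dioph {w : γ → ℕ | ∀ i : β, w ∈ {w : γ → ℕ | (w (inr (inr 1))).choose (w (inr (inr 3))) ∣
      (w (inr (inl i))).choose (w (inr (inr 0)) + 1)}} :=
    forall_fintype_dioph fun i => dvd_dioph dM
      (choose_dioph (proj_dioph _) (add_dioph (dv 0) (const_dioph 1)))
  have d5 : Dioph {w : γ → ℕ | (w (inr (inr 1))).choose (w (inr (inr 3))) ∣
      (p.map gp w).natAbs} := dvd_dioph dM (abs_poly_dioph _)
  refine (ex_dioph (d1.inter (d2.inter (d3.inter (d4.inter d5))))).ext fun v => ?_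
  have e : v ∈ {v : α → ℕ | ∀ k < f v, Option.elim' k v ∈ S} ↔
      (∀ k < f v, ∃ t : β → ℕ, p (Sum.elim (Option.elim' k v) t) = 0) := by
    simp only [Set.mem_ofPred_eq, hp]
  rw [e, core p b hb]
  have eb : ∀ x : β ⊕ Fin 4 → ℕ, b.map gb (Sum.elim v x) =
      b (Sum.elim (Option.elim' (x (inr 3)) v) (fun _ => x (inr 0))) := by
    intro x; rw [Poly.map_apply]; congr 1; ext ((_ | i) | i) <;> rfl
  have ep : ∀ x : β ⊕ Fin 4 → ℕ, p.map gp (Sum.elim v x) =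
      p (Sum.elim (Option.elim' (x (inr 1)) v) (x ∘ inl)) := by
    intro x; rw [Poly.map_apply]; congr 1; ext ((_ | i) | i) <;> rfl
  constructor
  · rintro ⟨x, h1, h2, h3, h4, h5⟩
    simp only [Set.mem_ofPred_eq, eb, ep, Sum.elim_inr] at h1 h2 h3 h4 h5
    replace h1 : f v = x (inr 3) := h1
    refine ⟨x ∘ inl, x (inr 0), x (inr 1), x (inr 2), ?_, h3, ?_, ?_⟩
    · rw [h1]; exact h2
    · rw [h1]; exact h4
    · rw [h1]; exact h5
  · rintro ⟨a, u, N, Q, h1, h2, h3, h4⟩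
    refine ⟨Sum.elim a ![u, N, Q, f v], ?_, ?_, ?_, ?_, ?_⟩
    · rfl
    · simp only [Set.mem_ofPred_eq, eb]; exact h1
    · exact h2
    · exact h3
    · simp only [Set.mem_ofPred_eq, ep]; exact h4

theorem vec_ball_dioph {n : ℕ} {S : Set (Vector3 ℕ (n + 1))} (d : Dioph S) {f : Vector3 ℕ n → ℕ}
    (df : DiophFn f) : Dioph {v : Vector3 ℕ n | ∀ k < f v, Vector3.cons k v ∈ S} := by
  refine (ball_dioph (reindex_dioph _ (Vector3.cons none some) d) df).ext fun v => ?_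
  refine forall_congr' fun k => imp_congr_right fun _ => ?_
  show Option.elim' k v ∘ Vector3.cons none some ∈ S ↔ _
  rw [show Option.elim' k v ∘ Vector3.cons none some = Vector3.cons k v from
          funext fun s => by cases s <;> rfl]
  exact Iff.rfl

end DPRM

namespace DPRM
open Nat Dioph Fin2 Sum Vector3
open scoped Vector3 Dioph

theorem pair_dioph {α : Type} {f g : (α → ℕ) → ℕ} (df : DiophFn f) (dg : DiophFn g) :
    DiophFn fun v => Nat.pair (f v) (g v) := by
  have : Dioph {v : Vector3 ℕ 3 | v &1 < v &2 ∧ v &0 = v &2 * v &2 + v &1 ∨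
      v &2 ≤ v &1 ∧ v &0 = v &1 * v &1 + v &1 + v &2} :=
    (D&1 D< D&2 D∧ D&0 D= D&2 D* D&2 D+ D&1) D∨
      (D&2 D≤ D&1 D∧ D&0 D= D&1 D* D&1 D+ D&1 D+ D&2)
  refine diophFn_comp2 df dg <| (diophFn_vec _).2 <| ext this <|
    (vectorAll_iff_forall _).1 fun z x y => ?_
  show (x < y ∧ z = y * y + x ∨ y ≤ x ∧ z = x * x + x + y) ↔ Nat.pair x y = z
  unfold Nat.pair
  split_ifs <;> omega

/-- Graph of a partial function is Diophantine. -/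
def Rel (f : ℕ →. ℕ) : Prop := Dioph {v : Vector3 ℕ 2 | v &1 ∈ f (v &0)}

theorem Rel.comp {f : ℕ →. ℕ} (hf : Rel f) {α : Type} {g h : (α → ℕ) → ℕ} (dg : DiophFn g)
    (dh : DiophFn h) : Dioph {v | h v ∈ f (g v)} :=
  dioph_comp2 dg dh (S := fun x y => y ∈ f x) hf

theorem Rel.of_iff {f : ℕ →. ℕ} {R : ℕ → ℕ → Prop} (d : Dioph {v : Vector3 ℕ 2 | R (v &0) (v &1)})
    (h : ∀ x y, R x y ↔ y ∈ f x) : Rel f :=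
  d.ext fun v => h (v &0) (v &1)

theorem exists_beta (s : ℕ → ℕ) (n : ℕ) :
    ∃ c b : ℕ, ∀ i ≤ n, c % ((i + 1) * b + 1) = s i := by
  let l := List.ofFn fun i : Fin (n + 1) => s i
  refine ⟨(Nat.unbeta l).unpair.1, (Nat.unbeta l).unpair.2, fun i hi => ?_⟩
  have := Nat.beta_unbeta_coe l ⟨i, by simp [l]; omega⟩
  exact this.trans (by simp only [l, Fin.getElem_fin, List.getElem_ofFn])

theorem mem_prec_iff (f g : ℕ →. ℕ) (a n y : ℕ) :
    y ∈ (Nat.rec (f a) (fun k IH => IH.bind fun i => g (Nat.pair a (Nat.pair k i))) n : Part ℕ) ↔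
    ∃ s : ℕ → ℕ, s 0 ∈ f a ∧ (∀ i < n, s (i + 1) ∈ g (Nat.pair a (Nat.pair i (s i)))) ∧
      s n = y := by
  induction n generalizing y with
  | zero =>
    constructor
    · intro h
      exact ⟨fun _ => y, h, by simp, rfl⟩
    · rintro ⟨s, h, -, rfl⟩
      exact h
  | succ n ih =>
    constructor
    · intro h
      obtain ⟨i, hi, hy⟩ := Part.mem_bind_iff.1 h
      obtain ⟨s, h0, h1, h2⟩ := (ih i).1 hi
      refine ⟨fun j => if j ≤ n then s j else y, by simpa using h0, fun j hj => ?_, by simp⟩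
      rcases Nat.lt_succ_iff_lt_or_eq.1 hj with h | h
      · simp only [show j + 1 ≤ n from h, show j ≤ n from h.le, if_true]
        exact h1 j h
      · subst h
        simp [h2, hy]
    · rintro ⟨s, h0, h1, rfl⟩
      exact Part.mem_bind_iff.2 ⟨s n, (ih _).2 ⟨s, h0, fun i hi => h1 i (by omega), rfl⟩,
        h1 n (by omega)⟩

theorem rel_prec {f g : ℕ →. ℕ} (hf : Rel f) (hg : Rel g) :
    Rel (Nat.unpaired fun a n => n.rec (f a) fun y IH => do
      let i ← IH; g (Nat.pair a (Nat.pair y i))) := by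
  have dball : Dioph {v : Vector3 ℕ 6 | ∀ i < v &2, Vector3.cons i v ∈
      {v : Vector3 ℕ 7 | v &2 % ((v &0 + 1 + 1) * v &1 + 1) ∈
        g (Nat.pair (v &4) (Nat.pair (v &0) (v &2 % ((v &0 + 1) * v &1 + 1))))}} :=
    vec_ball_dioph (hg.comp (pair_dioph (D&4) (pair_dioph (D&0)
      (D&2 D% ((D&0 D+ D.1) D* D&1 D+ D.1)))) (D&2 D% ((D&0 D+ D.1 D+ D.1) D* D&1 D+ D.1))) (D&2)
  have d0 : Dioph {v : Vector3 ℕ 6 | v &1 % ((0 + 1) * v &0 + 1) ∈ f (v &3)} :=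
    hf.comp (D&3) (D&1 D% ((D.0 D+ D.1) D* D&0 D+ D.1))
  have dz : Dioph {v : Vector3 ℕ 6 | v &4 = Nat.pair (v &3) (v &2)} :=
    D&4 D= pair_dioph (D&3) (D&2)
  have dy : Dioph {v : Vector3 ℕ 6 | v &1 % ((v &2 + 1) * v &0 + 1) = v &5} :=
    D&1 D% ((D&2 D+ D.1) D* D&0 D+ D.1) D= D&5
  have := (D∃) 2 <| (D∃) 3 <| (D∃) 4 <| (D∃) 5 <| dz.inter (d0.inter (dball.inter dy))
  refine Rel.of_iff (R := fun z y => ∃ a n c b : ℕ, z = Nat.pair a n ∧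
    c % ((0 + 1) * b + 1) ∈ f a ∧
    (∀ i < n, c % ((i + 1 + 1) * b + 1) ∈
      g (Nat.pair a (Nat.pair i (c % ((i + 1) * b + 1))))) ∧
    c % ((n + 1) * b + 1) = y) this fun z y => ?_
  constructor
  · rintro ⟨a, n, c, b, rfl, h0, h1, h2⟩
    simp only [Nat.unpaired, Nat.unpair_pair]
    exact (mem_prec_iff f g a n y).2 ⟨fun i => c % ((i + 1) * b + 1), h0, h1, h2⟩
  · intro h
    obtain ⟨s, h0, h1, h2⟩ := (mem_prec_iff f g z.unpair.1 z.unpair.2 y).1 h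
    obtain ⟨c, b, hcb⟩ := exists_beta s z.unpair.2
    refine ⟨z.unpair.1, z.unpair.2, c, b, by simp, ?_, fun i hi => ?_, ?_⟩
    · rw [hcb 0 (by omega)]; exact h0
    · rw [hcb i (by omega), hcb (i + 1) (by omega)]; exact h1 i hi
    · rw [hcb _ le_rfl]; exact h2

theorem rel_rfind {f : ℕ →. ℕ} (hf : Rel f) :
    Rel (fun a => Nat.rfind fun n => (fun m => decide (m = 0)) <$> f (Nat.pair a n)) := by
  have d1 : Dioph {v : Vector3 ℕ 2 | 0 ∈ f (Nat.pair (v &0) (v &1))} :=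
    hf.comp (pair_dioph (D&0) (D&1)) (D.0)
  have d2 : Dioph {v : Vector3 ℕ 2 | ∀ k < v &1, Vector3.cons k v ∈
      {v : Vector3 ℕ 3 | ∃ m, Vector3.cons m v ∈ {v : Vector3 ℕ 4 |
        v &0 + 1 ∈ f (Nat.pair (v &2) (v &1))}}} :=
    vec_ball_dioph ((D∃) 3 (hf.comp (pair_dioph (D&2) (D&1)) (D&0 D+ D.1))) (D&1)
  refine Rel.of_iff (R := fun x n => 0 ∈ f (Nat.pair x n) ∧
    ∀ k < n, ∃ m, m + 1 ∈ f (Nat.pair x k)) (d1.inter d2) fun x n => ?_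
  refine Iff.trans ?_ Nat.mem_rfind.symm
  constructor
  · rintro ⟨h0, h1⟩
    refine ⟨(Part.mem_map_iff _).2 ⟨0, h0, by simp⟩, fun {k} hk => ?_⟩
    obtain ⟨m, hm⟩ := h1 k hk
    exact (Part.mem_map_iff _).2 ⟨m + 1, hm, by simp⟩
  · rintro ⟨h0, h1⟩
    constructor
    · obtain ⟨m, hm, e⟩ := (Part.mem_map_iff _).1 h0
      have : m = 0 := by simpa using e
      exact this ▸ hm
    · intro k hk
      obtain ⟨m, hm, e⟩ := (Part.mem_map_iff _).1 (h1 hk)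
      have : m ≠ 0 := by simpa using e
      exact ⟨m - 1, by rwa [Nat.sub_add_cancel (by omega)]⟩

theorem rel_of_partrec {f : ℕ →. ℕ} (hf : Nat.Partrec f) : Rel f := by
  induction hf with
  | zero =>
    refine Rel.of_iff (R := fun x y => y = 0) (D&1 D= D.0) fun x y => ?_
    exact Part.mem_some_iff.symm
  | succ =>
    refine Rel.of_iff (R := fun x y => y = x + 1) (D&1 D= D&0 D+ D.1) fun x y => ?_
    simp [PFun.coe_val]
  | left =>
    have : Dioph {v : Vector3 ℕ 2 | ∃ b, Vector3.cons b v ∈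
      {v : Vector3 ℕ 3 | v &1 = Nat.pair (v &2) (v &0)}} :=
      (D∃) 2 (D&1 D= pair_dioph (D&2) (D&0))
    refine Rel.of_iff (R := fun x y => ∃ b, x = Nat.pair y b) this fun x y => ?_
    simp only [PFun.coe_val, Part.mem_some_iff]
    constructor
    · rintro ⟨b, rfl⟩; simp
    · rintro rfl; exact ⟨x.unpair.2, by simp⟩
  | right =>
    have : Dioph {v : Vector3 ℕ 2 | ∃ b, Vector3.cons b v ∈
      {v : Vector3 ℕ 3 | v &1 = Nat.pair (v &0) (v &2)}} :=
      (D∃) 2 (D&1 D= pair_dioph (D&0) (D&2))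
    refine Rel.of_iff (R := fun x y => ∃ b, x = Nat.pair b y) this fun x y => ?_
    simp only [PFun.coe_val, Part.mem_some_iff]
    constructor
    · rintro ⟨b, rfl⟩; simp
    · rintro rfl; exact ⟨x.unpair.1, by simp⟩
  | @pair f g _ _ hf hg =>
    have d1 : Dioph {v : Vector3 ℕ 4 | v &1 ∈ f (v &2)} := hf.comp (D&2) (D&1)
    have d2 : Dioph {v : Vector3 ℕ 4 | v &0 ∈ g (v &2)} := hg.comp (D&2) (D&0)
    have d3 : Dioph {v : Vector3 ℕ 4 | Nat.pair (v &1) (v &0) = v &3} :=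
      pair_dioph (D&1) (D&0) D= D&3
    refine Rel.of_iff (R := fun x y => ∃ a b, a ∈ f x ∧ b ∈ g x ∧ Nat.pair a b = y)
      ((D∃) 2 <| (D∃) 3 <| d1.inter (d2.inter d3)) fun x y => ?_
    simp [Seq.seq]
  | @comp f g _ _ hf hg =>
    have d1 : Dioph {v : Vector3 ℕ 3 | v &0 ∈ g (v &1)} := hg.comp (D&1) (D&0)
    have d2 : Dioph {v : Vector3 ℕ 3 | v &2 ∈ f (v &0)} := hf.comp (D&0) (D&2)
    refine Rel.of_iff (R := fun x y => ∃ a, a ∈ g x ∧ y ∈ f a)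
      ((D∃) 2 <| d1.inter d2) fun x y => ?_
    exact Part.mem_bind_iff.symm
  | prec _ _ hf hg => exact rel_prec hf hg
  | rfind _ hf => exact rel_rfind hf

end DPRM

namespace DPRM
open Nat Sum

/-- Equations of the three elementary shapes over a set of variables. -/
inductive Eqn (σ : Type) where
  | one (i : σ)
  | add (i j k : σ)
  | mul (i j k : σ)

/-- The equation holds under an assignment. -/
def Eqn.Holds {σ : Type} (x : σ → ℤ) : Eqn σ → Prop
  | .one i => x i = 1
  | .add i j k => x i + x j = x k
  | .mul i j k => x i * x j = x k

/-- Rename the variables. -/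
def Eqn.map {σ τ : Type} (g : σ → τ) : Eqn σ → Eqn τ
  | .one i => .one (g i)
  | .add i j k => .add (g i) (g j) (g k)
  | .mul i j k => .mul (g i) (g j) (g k)

theorem Eqn.holds_map {σ τ : Type} (g : σ → τ) (x : τ → ℤ) (e : Eqn σ) :
    (e.map g).Holds x ↔ e.Holds (x ∘ g) := by
  cases e <;> rfl

/-- Sets of integer points definable by an elementary system with finitely many dummies. -/
def SD {γ : Type} (S : Set (γ → ℤ)) : Prop :=
  ∃ (τ : Type) (_ : Fintype τ) (E : Set (Eqn (γ ⊕ τ))),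
    ∀ x, x ∈ S ↔ ∃ t : τ → ℤ, ∀ e ∈ E, e.Holds (Sum.elim x t)

theorem SD.of_eqn {γ : Type} (e : Eqn γ) : SD {x : γ → ℤ | e.Holds x} := by
  refine ⟨Empty, inferInstance, {e.map inl}, fun x => ?_⟩
  simp [Eqn.holds_map]

theorem SD.inter {γ : Type} {S T : Set (γ → ℤ)} (hS : SD S) (hT : SD T) : SD (S ∩ T) := by
  obtain ⟨σ, _, E, hE⟩ := hS
  obtain ⟨τ, _, F, hF⟩ := hT
  refine ⟨σ ⊕ τ, inferInstance,
    Eqn.map (Sum.map id inl) '' E ∪ Eqn.map (Sum.map id inr) '' F, fun x => ?_⟩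
  rw [Set.mem_inter_iff, hE, hF]
  have h1 : ∀ t : σ ⊕ τ → ℤ, Sum.elim x t ∘ Sum.map id inl = Sum.elim x (t ∘ inl) := by
    intro t; ext (i | i) <;> rfl
  have h2 : ∀ t : σ ⊕ τ → ℤ, Sum.elim x t ∘ Sum.map id inr = Sum.elim x (t ∘ inr) := by
    intro t; ext (i | i) <;> rfl
  constructor
  · rintro ⟨⟨s, hs⟩, ⟨t, ht⟩⟩
    refine ⟨Sum.elim s t, ?_⟩
    rintro _ (⟨e, he, rfl⟩ | ⟨e, he, rfl⟩)
    · rw [Eqn.holds_map, h1]; exact hs e he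
    · rw [Eqn.holds_map, h2]; exact ht e he
  · rintro ⟨t, ht⟩
    refine ⟨⟨t ∘ inl, fun e he => ?_⟩, ⟨t ∘ inr, fun e he => ?_⟩⟩
    · rw [← h1, ← Eqn.holds_map]; exact ht _ (Or.inl ⟨e, he, rfl⟩)
    · rw [← h2, ← Eqn.holds_map]; exact ht _ (Or.inr ⟨e, he, rfl⟩)

theorem SD.reindex {γ δ : Type} {S : Set (γ → ℤ)} (hS : SD S) (g : γ → δ) :
    SD {x : δ → ℤ | x ∘ g ∈ S} := by
  obtain ⟨σ, _, E, hE⟩ := hS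
  refine ⟨σ, inferInstance, Eqn.map (Sum.map g id) '' E, fun x => ?_⟩
  refine (hE (x ∘ g)).trans (exists_congr fun t => ?_)
  have : Sum.elim x t ∘ Sum.map g id = Sum.elim (x ∘ g) t := by ext (i | i) <;> rfl
  simp [Eqn.holds_map, this]

theorem SD.ex {γ δ : Type} [Fintype δ] {S : Set (γ ⊕ δ → ℤ)} (hS : SD S) :
    SD {x : γ → ℤ | ∃ y : δ → ℤ, Sum.elim x y ∈ S} := by
  obtain ⟨σ, _, E, hE⟩ := hS
  refine ⟨δ ⊕ σ, inferInstance, Eqn.map (Equiv.sumAssoc γ δ σ) '' E, fun x => ?_⟩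
  have h : ∀ (y : δ → ℤ) (t : σ → ℤ), Sum.elim x (Sum.elim y t) ∘ Equiv.sumAssoc γ δ σ =
      Sum.elim (Sum.elim x y) t := by intro y t; ext ((i | i) | i) <;> rfl
  constructor
  · rintro ⟨y, hy⟩
    obtain ⟨t, ht⟩ := (hE _).1 hy
    refine ⟨Sum.elim y t, ?_⟩
    rintro _ ⟨e, he, rfl⟩
    rw [Eqn.holds_map, h]; exact ht e he
  · rintro ⟨t, ht⟩
    refine ⟨t ∘ inl, (hE _).2 ⟨t ∘ inr, fun e he => ?_⟩⟩
    rw [← h, ← Eqn.holds_map, Sum.elim_comp_inl_inr]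
    exact ht _ ⟨e, he, rfl⟩

theorem SD.ext {γ : Type} {S T : Set (γ → ℤ)} (hS : SD S) (h : ∀ x, x ∈ S ↔ x ∈ T) : SD T :=
  Set.ext h ▸ hS

theorem SD.forall_finset {γ ι : Type} (s : Finset ι) {S : ι → Set (γ → ℤ)}
    (d : ∀ i, SD (S i)) : SD {v | ∀ i ∈ s, v ∈ S i} := by
  classical
  induction s using Finset.induction_on with
  | empty => exact ⟨Empty, inferInstance, ∅, fun x => by simp⟩
  | insert a s _ ih =>
    refine ((d a).inter ih).ext fun x => ?_
    simp [Set.mem_inter_iff]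

theorem sd_const {γ : Type} (i : γ) (n : ℤ) : SD {x : γ → ℤ | x i = n} := by
  induction n using Int.induction_on with
  | zero =>
    refine (SD.of_eqn (.add i i i)).ext fun x => ?_
    simp [Eqn.Holds]
  | succ n ih =>
    have h1 := (ih.reindex (δ := γ ⊕ Fin 2) (fun _ => inr 0)).inter
      ((SD.of_eqn (.one (inr 1))).inter (SD.of_eqn (.add (inr 0) (inr 1) (inl i))))
    refine h1.ex.ext fun x => ?_
    constructor
    · rintro ⟨y, h1, h2, h3⟩
      simp [Eqn.Holds] at h1 h2 h3 ⊢
      omega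
    · intro h
      refine ⟨![n, 1], ?_, ?_, ?_⟩ <;> simp [Eqn.Holds]
      exact h.symm
  | pred n ih =>
    have h1 := (ih.reindex (δ := γ ⊕ Fin 2) (fun _ => inr 0)).inter
      ((SD.of_eqn (.one (inr 1))).inter (SD.of_eqn (.add (inl i) (inr 1) (inr 0))))
    refine h1.ex.ext fun x => ?_
    constructor
    · rintro ⟨y, h1, h2, h3⟩
      simp [Eqn.Holds] at h1 h2 h3 ⊢
      omega
    · intro h
      refine ⟨![-n, 1], ?_, ?_, ?_⟩ <;> simp [Eqn.Holds]
      rw [Set.mem_ofPred_eq] at h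
      omega

theorem sd_nonneg {γ : Type} (i : γ) : SD {x : γ → ℤ | 0 ≤ x i} := by
  have h := (SD.of_eqn (γ := γ ⊕ Fin 10) (.mul (inr 0) (inr 0) (inr 4))).inter <|
    (SD.of_eqn (γ := γ ⊕ Fin 10) (.mul (inr 1) (inr 1) (inr 5))).inter <|
    (SD.of_eqn (γ := γ ⊕ Fin 10) (.mul (inr 2) (inr 2) (inr 6))).inter <|
    (SD.of_eqn (γ := γ ⊕ Fin 10) (.mul (inr 3) (inr 3) (inr 7))).inter <|
    (SD.of_eqn (γ := γ ⊕ Fin 10) (.add (inr 4) (inr 5) (inr 8))).inter <|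
    (SD.of_eqn (γ := γ ⊕ Fin 10) (.add (inr 6) (inr 7) (inr 9))).inter <|
    (SD.of_eqn (γ := γ ⊕ Fin 10) (.add (inr 8) (inr 9) (inl i)))
  refine h.ex.ext fun x => ?_
  constructor
  · rintro ⟨y, h1, h2, h3, h4, h5, h6, h7⟩
    simp only [Eqn.Holds, Set.mem_ofPred_eq, Sum.elim_inr, Sum.elim_inl] at h1 h2 h3 h4 h5 h6 h7 ⊢
    nlinarith [mul_self_nonneg (y 0), mul_self_nonneg (y 1), mul_self_nonneg (y 2),
      mul_self_nonneg (y 3)]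
  · intro h
    obtain ⟨a, b, c, d, e⟩ := Nat.sum_four_squares (x i).toNat
    have e' : (a : ℤ) ^ 2 + b ^ 2 + c ^ 2 + d ^ 2 = x i := by
      rw [← Int.toNat_of_nonneg (show 0 ≤ x i from h), ← e]; push_cast; rfl
    refine ⟨![a, b, c, d, a * a, b * b, c * c, d * d, a * a + b * b, c * c + d * d],
      rfl, rfl, rfl, rfl, rfl, rfl, ?_⟩
    show (a : ℤ) * a + b * b + (c * c + d * d) = x i
    rw [← e']; ring

theorem sd_poly {γ : Type} (p : Poly γ) :
    ∃ S : Set (γ ⊕ Unit → ℤ), SD S ∧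
      ∀ (x : γ → ℕ) (z : ℤ), Sum.elim (fun i => (x i : ℤ)) (fun _ => z) ∈ S ↔ z = p x := by
  have two : ∀ (f g : Poly γ) (S T : Set (γ ⊕ Unit → ℤ)), SD S → SD T →
      (∀ (x : γ → ℕ) (z : ℤ), Sum.elim (fun i => (x i : ℤ)) (fun _ => z) ∈ S ↔ z = f x) →
      (∀ (x : γ → ℕ) (z : ℤ), Sum.elim (fun i => (x i : ℤ)) (fun _ => z) ∈ T ↔ z = g x) →
      ∀ e : Eqn (Fin 3), ∃ U : Set (γ ⊕ Unit → ℤ), SD U ∧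
        ∀ (x : γ → ℕ) (z : ℤ), Sum.elim (fun i => (x i : ℤ)) (fun _ => z) ∈ U ↔
          e.Holds ![f x, g x, z] := by
    intro f g S T hS hT h1 h2 e
    have d := (hS.reindex (δ := (γ ⊕ Unit) ⊕ Fin 2) (Sum.elim (inl ∘ inl) (fun _ => inr 0))).inter
      ((hT.reindex (δ := (γ ⊕ Unit) ⊕ Fin 2) (Sum.elim (inl ∘ inl) (fun _ => inr 1))).inter
        (SD.of_eqn (γ := (γ ⊕ Unit) ⊕ Fin 2) (e.map ![inr 0, inr 1, inl (inr ())])))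
    refine ⟨_, d.ex, fun x z => ?_⟩
    have e1 : ∀ y : Fin 2 → ℤ, Sum.elim (Sum.elim (fun i => (x i : ℤ)) (fun _ : Unit => z)) y ∘
        (Sum.elim (inl ∘ inl) (fun _ : Unit => inr 0)) =
        Sum.elim (fun i => (x i : ℤ)) (fun _ => y 0) := by
      intro y; ext (i | i) <;> rfl
    have e2 : ∀ y : Fin 2 → ℤ, Sum.elim (Sum.elim (fun i => (x i : ℤ)) (fun _ : Unit => z)) y ∘
        (Sum.elim (inl ∘ inl) (fun _ : Unit => inr 1)) =
        Sum.elim (fun i => (x i : ℤ)) (fun _ => y 1) := by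
      intro y; ext (i | i) <;> rfl
    have e3 : ∀ y : Fin 2 → ℤ, Sum.elim (Sum.elim (fun i => (x i : ℤ)) (fun _ : Unit => z)) y ∘
        ![inr 0, inr 1, inl (inr ())] = ![y 0, y 1, z] := by
      intro y; ext i; fin_cases i <;> rfl
    constructor
    · rintro ⟨y, a1, a2, a3⟩
      rw [Set.mem_ofPred_eq, e1, h1] at a1
      rw [Set.mem_ofPred_eq, e2, h2] at a2
      rw [Set.mem_ofPred_eq, Eqn.holds_map, e3, a1, a2] at a3
      exact a3
    · intro h
      refine ⟨![f x, g x], ?_, ?_, ?_⟩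
      · rw [Set.mem_ofPred_eq, e1, h1]; rfl
      · rw [Set.mem_ofPred_eq, e2, h2]; rfl
      · rw [Set.mem_ofPred_eq, Eqn.holds_map, e3]; exact h
  induction p using Poly.induction with
  | H1 i =>
    have h := ((sd_const (γ := (γ ⊕ Unit) ⊕ Unit) (inr ()) 0).inter
      (SD.of_eqn (.add (inl (inl i)) (inr ()) (inl (inr ()))))).ex
    refine ⟨_, h, fun x z => ?_⟩
    constructor
    · rintro ⟨y, h1, h2⟩
      simp [Eqn.Holds] at h1 h2 ⊢
      omega
    · intro h
      refine ⟨fun _ => 0, rfl, ?_⟩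
      simpa [Eqn.Holds] using h.symm
  | H2 n => exact ⟨_, sd_const (inr ()) n, fun x z => by simp⟩
  | H3 f g hf hg =>
    obtain ⟨S, hS, h1⟩ := hf
    obtain ⟨T, hT, h2⟩ := hg
    obtain ⟨U, hU, h⟩ := two f g S T hS hT h1 h2 (.add 1 2 0)
    refine ⟨U, hU, fun x z => (h x z).trans ?_⟩
    simp [Eqn.Holds]
    omega
  | H4 f g hf hg =>
    obtain ⟨S, hS, h1⟩ := hf
    obtain ⟨T, hT, h2⟩ := hg
    obtain ⟨U, hU, h⟩ := two f g S T hS hT h1 h2 (.mul 0 1 2)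
    refine ⟨U, hU, fun x z => (h x z).trans ?_⟩
    simp [Eqn.Holds, eq_comm]

theorem sd_of_dioph {α : Type} [Fintype α] {S : Set (α → ℕ)} (d : Dioph S) :
    SD {x : α → ℤ | ∃ v ∈ S, ∀ i, x i = (v i : ℤ)} := by
  obtain ⟨β, _, p, hp⟩ := finite_dummies d
  obtain ⟨U, hU, h⟩ := sd_poly p
  -- all variables nonnegative, value zero
  have d1 : SD {x : (α ⊕ β) ⊕ Unit → ℤ | ∀ i ∈ (Finset.univ : Finset (α ⊕ β)),
      x ∈ {x : (α ⊕ β) ⊕ Unit → ℤ | 0 ≤ x (inl i)}} :=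
    SD.forall_finset _ fun i => sd_nonneg _
  have d2 := (d1.inter ((sd_const (inr ()) 0).inter hU)).ex.ex
  refine d2.ext fun x => ?_
  constructor
  · rintro ⟨y, z, h1, h2, h3⟩
    have hx : ∀ i, 0 ≤ x i := fun i => h1 (inl i) (Finset.mem_univ _)
    have hy : ∀ i, 0 ≤ y i := fun i => h1 (inr i) (Finset.mem_univ _)
    refine ⟨fun i => (x i).toNat, (hp _).2 ⟨fun i => (y i).toNat, ?_⟩,
      fun i => (Int.toNat_of_nonneg (hx i)).symm⟩
    have h4 := h (Sum.elim (fun i => (x i).toNat) (fun i => (y i).toNat)) (z ())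
    rw [show Sum.elim (fun i => ((Sum.elim (fun i => (x i).toNat) (fun i => (y i).toNat) i : ℕ) : ℤ))
      (fun _ : Unit => z ()) = Sum.elim (Sum.elim x y) z by
        ext ((i | i) | i)
        · simp [hx i]
        · simp [hy i]
        · rfl] at h4
    rw [← h4.1 h3]; exact h2
  · rintro ⟨v, hv, hxv⟩
    obtain ⟨t, ht⟩ := (hp v).1 hv
    have h4 := (h (Sum.elim v t) 0).2 ht.symm
    refine ⟨fun i => (t i : ℤ), fun _ => 0, ?_, rfl, ?_⟩
    · rintro (i | i) -
      · simp [hxv i]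
      · simp
    · convert h4 using 1
      ext ((i | i) | i)
      · simp [hxv i]
      · rfl
      · rfl

theorem sd_graph {f : ℕ → ℕ} (hf : Computable f) :
    SD {x : Bool → ℤ | ∃ k : ℕ, x false = k ∧ x true = f k} := by
  have h1 : Rel (f : ℕ →. ℕ) := rel_of_partrec (Partrec.nat_iff.1 hf.partrec)
  have h2 : Dioph {v : Bool → ℕ | v true = f (v false)} := by
    refine (Rel.comp h1 (Dioph.proj_dioph false) (Dioph.proj_dioph true)).ext fun v => ?_
    simp [PFun.coe_val]
  refine (sd_of_dioph h2).ext fun x => ?_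
  constructor
  · rintro ⟨v, hv, h⟩
    have hv : v true = f (v false) := hv
    exact ⟨v false, h false, by rw [h true, hv]⟩
  · rintro ⟨k, h1, h2⟩
    refine ⟨fun b => cond b (f k) k, rfl, ?_⟩
    rintro (_ | _)
    · exact h1
    · exact h2

end DPRM

namespace DPRM
open Sum

/-- The chain of constants `A_j = j + 1` together with the definition of `n`. -/
def chain {ρ : Type} (N : ℕ) (i0 : ρ) (j k : Fin N) : Set (Eqn (Fin N ⊕ ρ)) :=
  {e | (∃ a : Fin N, (a : ℕ) = 0 ∧ e = .one (inl a)) ∨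
    (∃ z a b : Fin N, (z : ℕ) = 0 ∧ (b : ℕ) = a + 1 ∧ e = .add (inl a) (inl z) (inl b)) ∨
    e = .add (inl j) (inl k) (inr i0)}

theorem main {f : ℕ → ℕ} (hf : Computable f) :
    ∃ m : ℕ, 0 < m ∧ ∀ n : ℕ, m ≤ n →
      ∃ (σ : Type) (_ : Fintype σ) (E : Set (Eqn σ)) (o w : σ), Fintype.card σ = n ∧
        (∃ x : σ → ℤ, ∀ z : ℤ, ∀ e ∈ E, e.Holds (fun i => open Classical in if i = w then z else x i)) ∧
        ∀ x : σ → ℤ, (∀ e ∈ E, e.Holds x) → x o = f n := by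
  classical
  obtain ⟨τ, _, E, hE⟩ := sd_graph hf
  obtain ⟨K, hK⟩ : ∃ K, K = Fintype.card ((Bool ⊕ τ) ⊕ Unit) := ⟨_, rfl⟩
  have hK0 : 3 ≤ K := by rw [hK]; simp
  refine ⟨2 * K, by omega, fun n hn => ?_⟩
  obtain ⟨N, rfl⟩ : ∃ N, n = N + K := ⟨n - K, by omega⟩
  let ρ := (Bool ⊕ τ) ⊕ Unit
  let j : Fin N := ⟨N - 1, by omega⟩
  let k : Fin N := ⟨K - 1, by omega⟩
  refine ⟨Fin N ⊕ ρ, inferInstance,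
    chain N (inl (inl false) : ρ) j k ∪ Eqn.map (inr ∘ inl) '' E,
    inr (inl (inl true)), inr (inr ()), by simp [ρ, hK], ?_, ?_⟩
  · obtain ⟨t, ht⟩ := (hE (fun b => cond b (f (N + K) : ℤ) ((N + K : ℕ) : ℤ))).1
      ⟨N + K, rfl, rfl⟩
    refine ⟨Sum.elim (fun a => (a : ℤ) + 1)
      (Sum.elim (Sum.elim (fun b => cond b (f (N + K) : ℤ) ((N + K : ℕ) : ℤ)) t) fun _ => 0), ?_⟩
    rintro z e ((⟨a, ha, rfl⟩ | ⟨o, a, b, ho, hb, rfl⟩ | rfl) | ⟨e, he, rfl⟩)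
    · simp [Eqn.Holds, ha]
    · simp [Eqn.Holds, ho, hb]
    · simp [Eqn.Holds, j, k]
      omega
    · rw [Eqn.holds_map]
      convert ht e he using 1
      ext i
      simp
  · intro x hx
    have hz : ∀ a : ℕ, ∀ h : a < N, x (inl ⟨a, h⟩) = a + 1 := by
      intro a
      induction a with
      | zero =>
        intro h
        simpa [Eqn.Holds] using hx (.one (inl ⟨0, h⟩)) (Or.inl (Or.inl ⟨_, rfl, rfl⟩))
      | succ a ih =>
        intro h
        have h0 := hx (.one (inl ⟨0, by omega⟩)) (Or.inl (Or.inl ⟨_, rfl, rfl⟩))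
        have h1 := hx (.add (inl ⟨a, by omega⟩) (inl ⟨0, by omega⟩) (inl ⟨a + 1, h⟩))
          (Or.inl (Or.inr (Or.inl ⟨_, _, _, rfl, rfl, rfl⟩)))
        have h2 := ih (by omega)
        simp only [Eqn.Holds] at h0 h1
        rw [← h1, h0, h2]; push_cast; ring
    have hn : x (inr (inl (inl false))) = ((N + K : ℕ) : ℤ) := by
      have h1 := hx (.add (inl j) (inl k) (inr (inl (inl false)))) (Or.inl (Or.inr (Or.inr rfl)))
      simp only [Eqn.Holds, j, k, hz] at h1
      rw [← h1]
      omega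
    have hg := (hE (fun b => x (inr (inl (inl b))))).2 ⟨fun i => x (inr (inl (inr i))), by
      intro e he
      have := hx (e.map (inr ∘ inl)) (Or.inr ⟨e, he, rfl⟩)
      rw [Eqn.holds_map] at this
      convert this using 1
      ext (i | i) <;> rfl⟩
    obtain ⟨k', h1, h2⟩ := hg
    replace h1 : x (inr (inl (inl false))) = (k' : ℤ) := h1
    replace h2 : x (inr (inl (inl true))) = (f k' : ℤ) := h2
    rw [hn] at h1
    have : k' = N + K := by exact_mod_cast h1.symm
    rw [this] at h2
    exact h2

end DPRM

/-- For every computable `f : ℕ → ℕ` there is a positive integer `m` such that for every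
`n ≥ m` there is a system `S ⊆ E_n` having infinitely many integer solutions, in all of
which the first coordinate equals `f n`. -/
theorem system_forcing_first_coordinate (f : ℕ → ℕ) (hf : Computable f) :
    ∃ m : ℕ, 0 < m ∧ ∀ n : ℕ, m ≤ n →
      ∃ S : EqnSystem n,
        {x : Fin n → ℤ | S.Solves x}.Infinite ∧
        ∀ x : Fin n → ℤ, S.Solves x → ∀ i : Fin n, (i : ℕ) = 0 → x i = f n := by
  obtain ⟨m, hm, H⟩ := DPRM.main hf
  refine ⟨m, hm, fun n hn => ?_⟩
  obtain ⟨σ, _, E, o, w, hc, ⟨x0, hx0⟩, hu⟩ := H n hn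
  have hn0 : 0 < n := by omega
  classical
  obtain ⟨g, hg⟩ : ∃ g : σ ≃ Fin n, g o = ⟨0, hn0⟩ := by
    let g0 : σ ≃ Fin n := Fintype.equivFinOfCardEq hc
    exact ⟨g0.trans (Equiv.swap (g0 o) ⟨0, hn0⟩), by simp⟩
  let S : EqnSystem n :=
    ⟨{i | .one (g.symm i) ∈ E}, {t | .add (g.symm t.1) (g.symm t.2.1) (g.symm t.2.2) ∈ E},
      {t | .mul (g.symm t.1) (g.symm t.2.1) (g.symm t.2.2) ∈ E}⟩
  have hS : ∀ x : Fin n → ℤ, S.Solves x ↔ ∀ e ∈ E, e.Holds (x ∘ g) := by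
    intro x
    constructor
    · rintro ⟨h1, h2, h3⟩ e he
      cases e with
      | one i => exact h1 (g i) (by simpa [S] using he)
      | add i j k => exact h2 (g i, g j, g k) (by simpa [S] using he)
      | mul i j k => exact h3 (g i, g j, g k) (by simpa [S] using he)
    · intro h
      refine ⟨fun i hi => ?_, fun t ht => ?_, fun t ht => ?_⟩
      · simpa [DPRM.Eqn.Holds] using h _ hi
      · simpa [DPRM.Eqn.Holds] using h _ ht
      · simpa [DPRM.Eqn.Holds] using h _ ht
  refine ⟨S, ?_, fun x hx i hi => ?_⟩
  · refine Set.infinite_of_injective_forall_mem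
      (f := fun (z : ℤ) (i : Fin n) => if g.symm i = w then z else x0 (g.symm i)) ?_ ?_
    · intro a b hab
      simpa using congrFun hab (g w)
    · intro z
      refine (hS _).2 fun e he => ?_
      convert hx0 z e he using 1
      ext i
      simp
  · have h1 := hu _ ((hS x).1 hx)
    have h2 : i = g o := by rw [hg]; exact Fin.ext hi
    rw [h2]; exact h1
end

section
/- For every computable function f : ℕ → ℕ there exists a positive integer m(f) such that for every integer n ≥ m(f) there exists an integer tuple (x_1,...,x_n) with x_1 = f(n) and the following property: for all integers y_1,...,y_n, if (i) for each i ∈ {1,...,n}, x_i = 1 implies y_i = 1, (ii) for all i,j,k ∈ {1,...,n}, x_i + x_j = x_k implies y_i + y_j = y_k, and (iii) for all i,j,k ∈ {1,...,n}, x_i · x_j = x_k implies y_i · y_j = y_k, then x_1 = y_1. -/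
namespace RigidTuple
open Nat

theorem choose_eq_digit (n k : ℕ) :
    n.choose k = (1 + 2 ^ (n + 1)) ^ n / (2 ^ (n + 1)) ^ k % 2 ^ (n + 1) := by
  set X := 2 ^ (n + 1) with hX
  have hlt : ∀ i, n.choose i < X := fun i => lt_of_le_of_lt (Nat.choose_le_two_pow n i)
    (Nat.pow_lt_pow_right (by norm_num) (by omega))
  have hX0 : 0 < X := by positivity
  -- low part
  have low : ∀ k, ∑ i ∈ Finset.range k, n.choose i * X ^ i < X ^ k := by
    intro k
    induction k with
    | zero => simp
    | succ k ih =>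
      rw [Finset.sum_range_succ]
      have h1 : n.choose k + 1 ≤ X := hlt k
      calc _ < X ^ k + n.choose k * X ^ k := by omega
        _ = (n.choose k + 1) * X ^ k := by ring
        _ ≤ X * X ^ k := Nat.mul_le_mul_right _ h1
        _ = X ^ (k + 1) := by ring
  have hexp : (1 + X) ^ n = ∑ i ∈ Finset.range (n + 1), n.choose i * X ^ i := by
    rw [add_comm, add_pow]
    apply Finset.sum_congr rfl
    intro i _; simp [mul_comm]
  have hext : ∑ i ∈ Finset.range (n + 1), n.choose i * X ^ i
      = ∑ i ∈ Finset.range (k + 1 + n), n.choose i * X ^ i := by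
    apply Finset.sum_subset
    · intro i; simp; omega
    · intro i _ hi
      simp only [Finset.mem_range, not_lt] at hi
      rw [Nat.choose_eq_zero_of_lt (by omega)]; simp
  have hsplit : (1 + X) ^ n = ∑ i ∈ Finset.range k, n.choose i * X ^ i
      + X ^ k * (n.choose k + X * ∑ i ∈ Finset.range n, n.choose (k + 1 + i) * X ^ i) := by
    rw [hexp, hext, Finset.sum_range_add, Finset.sum_range_succ, mul_add, Finset.mul_sum,
      Finset.mul_sum, add_assoc, mul_comm (n.choose k)]
    congr 2
    apply Finset.sum_congr rfl
    intro i _; ring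
  rw [hsplit, Nat.add_mul_div_left _ _ (by positivity), Nat.div_eq_of_lt (low k), zero_add,
    Nat.add_mul_mod_self_left, Nat.mod_eq_of_lt (hlt k)]

theorem factorial_eq_div (n : ℕ) :
    n ! = ((n + 2) ^ (n + 4)) ^ n / ((n + 2) ^ (n + 4)).choose n := by
  set r := (n + 2) ^ (n + 4) with hr
  have hfac : n ! ≤ (n + 2) ^ n :=
    (Nat.factorial_le_pow n).trans (Nat.pow_le_pow_left (by omega) n)
  have hrbig : n ^ 2 * (n ! + 1) < r := by
    have h1 : 1 ≤ (n + 2) ^ n := Nat.one_le_pow _ _ (by omega)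
    have e : r = (n + 2) ^ n * (n + 2) ^ 4 := by rw [hr, pow_add]
    rw [e]
    have h2 : n ^ 2 * (n ! + 1) ≤ n ^ 2 * (2 * (n + 2) ^ n) :=
      Nat.mul_le_mul_left _ (by omega)
    have h3 : n ^ 2 * 2 < (n + 2) ^ 4 := by nlinarith [sq_nonneg (n : ℤ), Nat.zero_le (n ^ 3), Nat.zero_le (n ^ 4)]
    calc _ ≤ n ^ 2 * (2 * (n + 2) ^ n) := h2
      _ = (n + 2) ^ n * (n ^ 2 * 2) := by ring
      _ < _ := Nat.mul_lt_mul_of_pos_left h3 (by omega)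
  have hnr : n ≤ r := by
    have : n ≤ n ^ 2 * (n ! + 1) := by
      rcases Nat.eq_zero_or_pos n with h | h
      · simp [h]
      · nlinarith [Nat.factorial_pos n]
    omega
  have hd : r.descFactorial n = n ! * r.choose n := Nat.descFactorial_eq_factorial_mul_choose r n
  have hr0 : 0 < r := by positivity
  have hb : (n ! : ℚ) * r ^ n < (n ! + 1) * ((r - n : ℕ) : ℚ) ^ n := by
    have hrq : (0 : ℚ) < r := by exact_mod_cast hr0
    have hn1 : (n : ℚ) / r ≤ 1 := by
      rw [div_le_one hrq]; exact_mod_cast hnr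
    have ber := one_add_mul_le_pow (a := -((n : ℚ) / r)) (by linarith) n
    have e1 : ((r - n : ℕ) : ℚ) = r * (1 + -((n : ℚ) / r)) := by
      rw [Nat.cast_sub hnr]; field_simp; ring
    rw [e1, mul_pow]
    have hp : (0 : ℚ) < (r : ℚ) ^ n := by positivity
    have hq : (n : ℚ) ^ 2 * (n ! + 1) < r := by exact_mod_cast hrbig
    have key : (n ! : ℚ) < (n ! + 1) * (1 + n * -((n : ℚ) / r)) := by
      have : (n ! + 1 : ℚ) * (1 + n * -((n : ℚ) / r)) = n ! + (r - (n : ℚ) ^ 2 * (n ! + 1)) / r := by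
        field_simp; ring
      rw [this]
      have : 0 < (r - (n : ℚ) ^ 2 * (n ! + 1)) / r := div_pos (by linarith) hrq
      linarith
    have k2 : (n ! : ℚ) < (n ! + 1) * (1 + -((n : ℚ) / r)) ^ n :=
      lt_of_lt_of_le key (mul_le_mul_of_nonneg_left ber (by positivity))
    nlinarith [mul_lt_mul_of_pos_left k2 hp]
  have hb' : n ! * r ^ n < (n ! + 1) * (r - n) ^ n := by exact_mod_cast hb
  have hle : (r - n) ^ n ≤ r.descFactorial n :=
    (Nat.pow_le_pow_left (by omega) n).trans (Nat.pow_sub_le_descFactorial r n)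
  symm
  apply Nat.div_eq_of_lt_le
  · rw [← hd]; exact Nat.descFactorial_le_pow r n
  · have h := lt_of_lt_of_le hb' (Nat.mul_le_mul_left _ hle)
    rw [hd] at h
    apply Nat.lt_of_mul_lt_mul_left (a := n !)
    calc _ < _ := h
      _ = _ := by ring

open Dioph in
theorem choose_dioph {α : Type} {f g : (α → ℕ) → ℕ} (df : DiophFn f) (dg : DiophFn g) :
    DiophFn fun v => (f v).choose (g v) := by
  have : (fun v => (f v).choose (g v)) = fun v =>
    (1 + 2 ^ (f v + 1)) ^ f v / (2 ^ (f v + 1)) ^ g v % 2 ^ (f v + 1) := by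
    funext v; exact choose_eq_digit _ _
  rw [this]
  have dX : DiophFn fun v => 2 ^ (f v + 1) := pow_dioph (const_dioph 2) (add_dioph df (const_dioph 1))
  exact mod_dioph (div_dioph (pow_dioph (add_dioph (const_dioph 1) dX) df) (pow_dioph dX dg)) dX

open Dioph in
theorem factorial_dioph {α : Type} {f : (α → ℕ) → ℕ} (df : DiophFn f) :
    DiophFn fun v => (f v)! := by
  have : (fun v => (f v)!) = fun v =>
    ((f v + 2) ^ (f v + 4)) ^ f v / ((f v + 2) ^ (f v + 4)).choose (f v) := by
    funext v; exact factorial_eq_div _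
  rw [this]
  have dr : DiophFn fun v => (f v + 2) ^ (f v + 4) :=
    pow_dioph (add_dioph df (const_dioph 2)) (add_dioph df (const_dioph 4))
  exact div_dioph (pow_dioph dr df) (choose_dioph dr df)


theorem md_mul {B N k : ℕ} (hk : k < B) (hN : N = B ! * B !) :
    (k + 1) * (N / (k + 1) + 1) = N + k + 1 := by
  have h1 : (k + 1) ∣ N := hN ▸ Dvd.dvd.mul_left (Nat.dvd_factorial (by omega) (by omega)) _
  rw [mul_add, Nat.mul_div_cancel' h1]; ring

theorem md_prime {B N k q : ℕ} (hk : k < B) (hN : N = B ! * B !) (hq : q.Prime)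
    (hd : q ∣ N / (k + 1) + 1) : B < q := by
  by_contra hle
  have h1 : (k + 1) ∣ B ! := Nat.dvd_factorial (by omega) (by omega)
  have h2 : q ∣ B ! := Nat.dvd_factorial hq.pos (by omega)
  have h3 : N / (k + 1) = B ! * (B ! / (k + 1)) := by rw [hN, Nat.mul_div_assoc _ h1]
  have h4 : q ∣ N / (k + 1) := h3 ▸ h2.mul_right _
  exact hq.one_lt.ne' (Nat.dvd_one.1 ((Nat.dvd_add_right h4).1 hd))

theorem md_coprime {B N j k : ℕ} (hj : j < B) (hk : k < B) (hjk : j ≠ k) (hN : N = B ! * B !) :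
    Nat.Coprime (N / (j + 1) + 1) (N / (k + 1) + 1) := by
  wlog h : j < k generalizing j k
  · exact (this hk hj hjk.symm (by omega)).symm
  apply Nat.Coprime.symm
  apply Nat.coprime_of_dvd
  intro q hq h1 h2
  have hB := md_prime hj hN hq h2
  have d1 : q ∣ N + j + 1 := md_mul hj hN ▸ h2.mul_left _
  have d2 : q ∣ N + k + 1 := md_mul hk hN ▸ h1.mul_left _
  have d3 := Nat.dvd_sub d2 d1
  have := Nat.le_of_dvd (by omega) d3
  omega

theorem choose_eq_md_prod {B N l : ℕ} (hl : l ≤ B) (hN : N = B ! * B !) :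
    (N + l).choose l = ∏ k ∈ Finset.range l, (N / (k + 1) + 1) := by
  apply Nat.eq_of_mul_eq_mul_left (Nat.factorial_pos l)
  rw [← Nat.ascFactorial_eq_factorial_mul_choose, Nat.ascFactorial_eq_prod_range,
    ← Finset.prod_range_add_one_eq_factorial, ← Finset.prod_mul_distrib]
  apply Finset.prod_congr rfl
  intro k hk
  rw [md_mul (by have := Finset.mem_range.1 hk; omega) hN]; ring

theorem exists_residue {q A u : ℕ} (hq : q.Prime) (h : q ∣ A.choose (u + 1)) :
    ∃ a ≤ u, A ≡ a [MOD q] := by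
  have h1 : q ∣ A.descFactorial (u + 1) := by
    rw [Nat.descFactorial_eq_factorial_mul_choose]; exact h.mul_left _
  by_cases hA : A ≤ u
  · exact ⟨A, hA, rfl⟩
  rw [Nat.descFactorial_eq_prod_range, hq.prime.dvd_finsetProd_iff] at h1
  obtain ⟨j, hj, hd⟩ := h1
  have hj' := Finset.mem_range.1 hj
  exact ⟨j, by omega, ((Nat.modEq_iff_dvd' (by omega)).2 hd).symm⟩

theorem dvd_desc {m A a u : ℕ} (ha : a ≤ u) (h : A ≡ a [MOD m]) :
    m ∣ A.descFactorial (u + 1) := by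
  by_cases hA : A < a
  · rw [Nat.descFactorial_eq_zero_iff_lt.2 (by omega)]; exact dvd_zero _
  rw [Nat.descFactorial_eq_prod_range]
  exact ((Nat.modEq_iff_dvd' (by omega)).1 h.symm).trans
    (Finset.dvd_prod_of_mem (fun i => A - i) (Finset.mem_range.2 (by omega : a < u + 1)))

theorem bounded_forall_core {ι : Type} [Finite ι] (G : ℕ → (ι → ℕ) → ℤ) (e l : ℕ) (H : ℕ → Prop)
    (hG : ∀ (q K k : ℕ) (A a : ι → ℕ), K ≡ k [MOD q] → (∀ i, A i ≡ a i [MOD q]) →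
      G K A ≡ G k a [ZMOD q])
    (hH : ∃ u0, ∀ u ≥ u0, H u)
    (hB : ∀ u k a, H u → k ≤ u → (∀ i, a i ≤ u) → |G k a| ≤ ((u + 2) ^ e : ℕ)) :
    (∀ k < l, ∃ a, G k a = 0) ↔ ∃ (A : ι → ℕ) (u K B N M : ℕ), H u ∧ l ≤ u ∧
      B = (u + 2) ^ e + u + 1 ∧ N = B ! * B ! ∧ M = (N + l).choose l ∧
      M ∣ K + 1 + N ∧ (∀ i, M ∣ (A i).choose (u + 1)) ∧ (M : ℤ) ∣ G K A := by
  constructor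
  · intro h
    obtain ⟨u0, hu0⟩ := hH
    choose! a ha using h
    obtain ⟨u1, hu1⟩ : ∃ u1, ∀ k < l, ∀ i, a k i ≤ u1 := by
      have : (Set.range fun x : Fin l × ι => a x.1 x.2).Finite := Set.finite_range _
      obtain ⟨u1, h⟩ := this.bddAbove
      exact ⟨u1, fun k hk i => h ⟨(⟨k, hk⟩, i), rfl⟩⟩
    obtain ⟨u, hu⟩ : ∃ u, u = u0 + u1 + l := ⟨_, rfl⟩
    obtain ⟨B, hBe⟩ : ∃ B, B = (u + 2) ^ e + u + 1 := ⟨_, rfl⟩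
    obtain ⟨N, hN⟩ : ∃ N, N = B ! * B ! := ⟨_, rfl⟩
    obtain ⟨M, hM⟩ : ∃ M, M = (N + l).choose l := ⟨_, rfl⟩
    have hM' := hM
    rw [choose_eq_md_prod (B := B) (by omega) hN] at hM'
    have hM0 : 0 < M := by rw [hM]; exact Nat.choose_pos (by omega)
    have hmd : ∀ k < l, N / (k + 1) + 1 ∣ M := fun k hk => by
      rw [hM']; exact Finset.dvd_prod_of_mem (fun k => N / (k + 1) + 1) (Finset.mem_range.2 hk)
    have hco : Set.Pairwise (Finset.range l : Set ℕ)
        (Function.onFun Nat.Coprime fun k => N / (k + 1) + 1) := by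
      intro i hi j hj hij
      simp at hi hj
      exact md_coprime (B := B) (by omega) (by omega) hij hN
    have hdvd : ∀ z : ℤ, (∀ k < l, ((N / (k + 1) + 1 : ℕ) : ℤ) ∣ z) → (M : ℤ) ∣ z := by
      intro z hz
      rw [hM', Nat.cast_prod]
      apply Finset.prod_dvd_of_coprime
      · intro i hi j hj hij
        exact Nat.isCoprime_iff_coprime.2 (hco hi hj hij)
      · intro i hi; exact hz i (Finset.mem_range.1 hi)
    have hdvdN : ∀ z : ℕ, (∀ k < l, (N / (k + 1) + 1) ∣ z) → M ∣ z := by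
      intro z hz
      have := hdvd z fun k hk => by exact_mod_cast hz k hk
      exact_mod_cast this
    have hcrt : ∀ i, ∃ A, ∀ k < l, A ≡ a k i [MOD N / (k + 1) + 1] := by
      intro i
      have A := Nat.chineseRemainderOfFinset (fun k => a k i) (fun k => N / (k + 1) + 1)
        (Finset.range l) (fun k _ => Nat.succ_ne_zero _) hco
      exact ⟨A.1, fun k hk => A.2 k (Finset.mem_range.2 hk)⟩
    choose A hA using hcrt
    have hK : ∃ K, M ∣ K + 1 + N := by
      refine ⟨(N + 1) * (M - 1), N + 1, ?_⟩
      obtain ⟨M', rfl⟩ : ∃ M', M = M' + 1 := ⟨M - 1, by omega⟩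
      simp; ring
    obtain ⟨K, hK⟩ := hK
    refine ⟨A, u, K, B, N, M, hu0 u (by omega), by omega, hBe, hN, hM, hK, ?_, ?_⟩
    · intro i
      have h1 : M ∣ (u + 1)! * (A i).choose (u + 1) := by
        rw [← Nat.descFactorial_eq_factorial_mul_choose]
        exact hdvdN _ fun k hk => dvd_desc ((hu1 k hk i).trans (by omega)) (hA i k hk)
      refine Nat.Coprime.dvd_of_dvd_mul_left ?_ h1
      apply Nat.coprime_of_dvd
      intro q hq h2 h3
      rw [hM', hq.prime.dvd_finsetProd_iff] at h2
      obtain ⟨k, hk, hd⟩ := h2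
      have hk' := Finset.mem_range.1 hk
      have := md_prime (B := B) (by omega) hN hq hd
      have := (hq.dvd_factorial).1 h3
      omega
    · apply hdvd
      intro k hk
      have hKk : K ≡ k [MOD N / (k + 1) + 1] := by
        have h1 : N / (k + 1) + 1 ∣ N + k + 1 :=
          md_mul (B := B) (k := k) (by omega) hN ▸ Nat.dvd_mul_left _ _
        have h2 := (hmd k hk).trans hK
        have h3 : K + (1 + N) ≡ k + (1 + N) [MOD N / (k + 1) + 1] :=
          (Nat.modEq_zero_iff_dvd.2 ((show K + (1 + N) = K + 1 + N by ring) ▸ h2)).trans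
          (Nat.modEq_zero_iff_dvd.2 ((show k + (1 + N) = N + k + 1 by ring) ▸ h1)).symm
        exact Nat.ModEq.add_right_cancel' _ h3
      have := hG _ K k A (a k) hKk fun i => hA i k hk
      rw [ha k hk] at this
      exact Int.modEq_zero_iff_dvd.1 this
  · rintro ⟨A, u, K, B, N, M, hu, hlu, hBe, hN, hM, hK, hA, hGM⟩ k hk
    have hM' := hM
    rw [choose_eq_md_prod (B := B) (by omega) hN] at hM'
    have hN0 : 0 < N / (k + 1) := by
      apply Nat.div_pos _ (by omega)
      rw [hN]
      have := Nat.self_le_factorial B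
      have := Nat.le_mul_self (B !)
      omega
    obtain ⟨q, hq, hqd⟩ := Nat.exists_prime_and_dvd (n := N / (k + 1) + 1) (by omega)
    have hqM : q ∣ M := hqd.trans (by
      rw [hM']; exact Finset.dvd_prod_of_mem (fun k => N / (k + 1) + 1) (Finset.mem_range.2 hk))
    have hqB := md_prime (B := B) (by omega) hN hq hqd
    choose a hau haA using fun i => exists_residue hq (hqM.trans (hA i))
    refine ⟨a, ?_⟩
    have hKk : K ≡ k [MOD q] := by
      have h1 : q ∣ N + k + 1 := md_mul (B := B) (k := k) (by omega) hN ▸ hqd.mul_left _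
      have h2 := hqM.trans hK
      have h3 : K + (1 + N) ≡ k + (1 + N) [MOD q] :=
        (Nat.modEq_zero_iff_dvd.2 ((show K + (1 + N) = K + 1 + N by ring) ▸ h2)).trans
        (Nat.modEq_zero_iff_dvd.2 ((show k + (1 + N) = N + k + 1 by ring) ▸ h1)).symm
      exact Nat.ModEq.add_right_cancel' _ h3
    have h1 := hG q K k A a hKk haA
    have h2 : (q : ℤ) ∣ G K A := (Int.natCast_dvd_natCast.2 hqM).trans hGM
    have h3 : (q : ℤ) ∣ G k a :=
      Int.modEq_zero_iff_dvd.1 (h1.symm.trans (Int.modEq_zero_iff_dvd.2 h2))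
    apply Int.eq_zero_of_abs_lt_dvd h3
    refine lt_of_le_of_lt (hB u k a hu (by omega) hau) ?_
    exact_mod_cast (by omega : (u + 2) ^ e < q)

theorem poly_congr {α : Type} (p : Poly α) (q : ℕ) (x y : α → ℕ) (h : ∀ i, x i ≡ y i [MOD q]) :
    p x ≡ p y [ZMOD q] := by
  induction p using Poly.induction with
  | H1 i => simpa using (Int.natCast_modEq_iff.2 (h i))
  | H2 n => exact Int.ModEq.refl _
  | H3 f g hf hg => exact hf.sub hg
  | H4 f g hf hg => exact hf.mul hg

theorem poly_bound {α : Type} (p : Poly α) :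
    ∃ e : ℕ, ∀ (u : ℕ) (x : α → ℕ), (∀ i, x i ≤ u) → |p x| ≤ ((u + 2) ^ e : ℕ) := by
  induction p using Poly.induction with
  | H1 i =>
    refine ⟨1, fun u x hx => ?_⟩
    have := hx i
    simp only [Poly.proj_apply, pow_one]
    rw [abs_of_nonneg (by positivity)]
    exact_mod_cast (by omega)
  | H2 n =>
    refine ⟨n.natAbs, fun u x _ => ?_⟩
    simp only [Poly.const_apply]
    rw [Int.abs_eq_natAbs]
    have h1 : n.natAbs < 2 ^ n.natAbs := Nat.lt_two_pow_self
    have h2 : 2 ^ n.natAbs ≤ (u + 2) ^ n.natAbs := Nat.pow_le_pow_left (by omega) _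
    exact_mod_cast (by omega)
  | H3 f g hf hg =>
    obtain ⟨e1, h1⟩ := hf
    obtain ⟨e2, h2⟩ := hg
    refine ⟨e1 + e2 + 1, fun u x hx => ?_⟩
    have a1 := h1 u x hx
    have a2 := h2 u x hx
    have b1 : (u + 2) ^ e1 ≤ (u + 2) ^ (e1 + e2) := Nat.pow_le_pow_right (by omega) (by omega)
    have b2 : (u + 2) ^ e2 ≤ (u + 2) ^ (e1 + e2) := Nat.pow_le_pow_right (by omega) (by omega)
    have b3 : 2 * (u + 2) ^ (e1 + e2) ≤ (u + 2) ^ (e1 + e2 + 1) := by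
      rw [pow_succ, mul_comm]; exact Nat.mul_le_mul_left _ (by omega)
    have b4 : (u + 2) ^ e1 + (u + 2) ^ e2 ≤ (u + 2) ^ (e1 + e2 + 1) := by omega
    rw [Poly.sub_apply]
    calc _ ≤ |f x| + |g x| := abs_sub _ _
      _ ≤ ((u + 2) ^ e1 : ℕ) + ((u + 2) ^ e2 : ℕ) := add_le_add a1 a2
      _ ≤ _ := by exact_mod_cast b4
  | H4 f g hf hg =>
    obtain ⟨e1, h1⟩ := hf
    obtain ⟨e2, h2⟩ := hg
    refine ⟨e1 + e2, fun u x hx => ?_⟩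
    rw [Poly.mul_apply, abs_mul, pow_add, Nat.cast_mul]
    exact mul_le_mul (h1 u x hx) (h2 u x hx) (abs_nonneg _) (by positivity)

theorem poly_support {α : Type} (p : Poly α) :
    ∃ s : Finset α, ∀ x y : α → ℕ, (∀ i ∈ s, x i = y i) → p x = p y := by
  classical
  induction p using Poly.induction with
  | H1 i => exact ⟨{i}, fun x y h => by simp [h i (by simp)]⟩
  | H2 n => exact ⟨∅, fun x y h => rfl⟩
  | H3 f g hf hg =>
    obtain ⟨s, hs⟩ := hf
    obtain ⟨t, ht⟩ := hg
    exact ⟨s ∪ t, fun x y h => by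
      rw [Poly.sub_apply, Poly.sub_apply, hs x y fun i hi => h i (Finset.mem_union_left _ hi),
        ht x y fun i hi => h i (Finset.mem_union_right _ hi)]⟩
  | H4 f g hf hg =>
    obtain ⟨s, hs⟩ := hf
    obtain ⟨t, ht⟩ := hg
    exact ⟨s ∪ t, fun x y h => by
      rw [Poly.mul_apply, Poly.mul_apply, hs x y fun i hi => h i (Finset.mem_union_left _ hi),
        ht x y fun i hi => h i (Finset.mem_union_right _ hi)]⟩

/-- The dummy variables may be taken to be finitely many. -/
theorem finite_dummies {α : Type} {S : Set (α → ℕ)} (d : Dioph S) :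
    ∃ (ι : Type) (_ : Finite ι) (p : Poly (α ⊕ ι)),
      ∀ v, v ∈ S ↔ ∃ t, p (Sum.elim v t) = 0 := by
  classical
  obtain ⟨β, p, hp⟩ := d
  obtain ⟨s, hs⟩ := poly_support p
  let g : β → Option {b : β // Sum.inr b ∈ s} := fun b => if h : Sum.inr b ∈ s then some ⟨b, h⟩ else none
  have hfin : Finite {b : β // Sum.inr b ∈ s} :=
    Finite.of_injective (fun b => (⟨Sum.inr b.1, b.2⟩ : {x // x ∈ s})) (by
      intro a b hab
      simpa [Subtype.ext_iff] using hab)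
  refine ⟨Option {b : β // Sum.inr b ∈ s}, inferInstance,
    p.map (Sum.elim Sum.inl (Sum.inr ∘ g)), fun v => (hp v).trans ⟨?_, ?_⟩⟩
  · rintro ⟨t, ht⟩
    refine ⟨fun o => o.elim 0 fun b => t b.1, ?_⟩
    rw [Poly.map_apply, ← ht]
    apply hs
    rintro (a | b) hi
    · rfl
    · simp [g, hi]
  · rintro ⟨t, ht⟩
    refine ⟨t ∘ g, ?_⟩
    rw [Poly.map_apply] at ht
    rw [← ht]
    apply hs
    rintro (a | b) hi <;> rfl

theorem forall_fin_dioph {α ι : Type} [Finite ι] {S : ι → Set (α → ℕ)} (d : ∀ i, Dioph (S i)) :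
    Dioph {v | ∀ i, v ∈ S i} := by
  classical
  have := Fintype.ofFinite ι
  refine (Dioph.DiophList.forall ((Finset.univ : Finset ι).toList.map S) ?_).ext ?_
  · rw [List.forall_iff_forall_mem]; simpa using d
  · intro v
    simp [List.forall_iff_forall_mem]

open Dioph in
theorem ball_dioph {n : ℕ} {S : Set (Vector3 ℕ (n + 1))} (d : Dioph S) {f : Vector3 ℕ n → ℕ}
    (df : DiophFn f) : Dioph {v : Vector3 ℕ n | ∀ k < f v, Vector3.cons k v ∈ S} := by
  obtain ⟨ι, hι, p, hp⟩ := finite_dummies d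
  obtain ⟨e, he⟩ := poly_bound p
  let r : Fin2 (n + 1) ⊕ ι → Fin2 n ⊕ (ι ⊕ Fin 5) :=
    Sum.elim (Vector3.cons (Sum.inr (Sum.inr 1)) Sum.inl) (fun i => Sum.inr (Sum.inl i))
  have hcore : ∀ v : Vector3 ℕ n, (∀ k < f v, Vector3.cons k v ∈ S) ↔
      ∃ (A : ι → ℕ) (u K B N M : ℕ), (∀ i, v i ≤ u) ∧ f v ≤ u ∧
      B = (u + 2) ^ e + u + 1 ∧ N = B ! * B ! ∧ M = (N + f v).choose (f v) ∧
      M ∣ K + 1 + N ∧ (∀ i, M ∣ (A i).choose (u + 1)) ∧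
        (M : ℤ) ∣ p (Sum.elim (Vector3.cons K v) A) := by
    intro v
    rw [← bounded_forall_core (fun K A => p (Sum.elim (Vector3.cons K v) A)) e (f v)
      (fun u => ∀ i, v i ≤ u)]
    · exact forall₂_congr fun k _ => hp _
    · intro q K k A a hK hA
      apply poly_congr
      rintro (i | i)
      · cases i with
        | fz => exact hK
        | fs i => exact Nat.ModEq.refl _
      · exact hA i
    · obtain ⟨u0, h⟩ := (Set.finite_range v).bddAbove
      exact ⟨u0, fun u hu i => (h ⟨i, rfl⟩).trans hu⟩
    · intro u k a hu hk ha
      apply he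
      rintro (i | i)
      · cases i with
        | fz => exact hk
        | fs i => exact hu i
      · exact ha i
  have key : Dioph {w : Fin2 n ⊕ (ι ⊕ Fin 5) → ℕ |
      (∀ i : Fin2 n, w (Sum.inl i) ≤ w (Sum.inr (Sum.inr 0))) ∧
      f (w ∘ Sum.inl) ≤ w (Sum.inr (Sum.inr 0)) ∧
      w (Sum.inr (Sum.inr 2)) = (w (Sum.inr (Sum.inr 0)) + 2) ^ e + w (Sum.inr (Sum.inr 0)) + 1 ∧
      w (Sum.inr (Sum.inr 3)) = (w (Sum.inr (Sum.inr 2)))! * (w (Sum.inr (Sum.inr 2)))! ∧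
      w (Sum.inr (Sum.inr 4)) = (w (Sum.inr (Sum.inr 3)) + f (w ∘ Sum.inl)).choose
        (f (w ∘ Sum.inl)) ∧
      w (Sum.inr (Sum.inr 4)) ∣ w (Sum.inr (Sum.inr 1)) + 1 + w (Sum.inr (Sum.inr 3)) ∧
      (∀ i, w (Sum.inr (Sum.inr 4)) ∣ (w (Sum.inr (Sum.inl i))).choose
        (w (Sum.inr (Sum.inr 0)) + 1)) ∧
      w (Sum.inr (Sum.inr 4)) ∣ ((p.map r) w).natAbs} := by
    have dp := fun i : Fin2 n ⊕ (ι ⊕ Fin 5) => proj_dioph i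
    have dc := fun k : ℕ => const_dioph (α := Fin2 n ⊕ (ι ⊕ Fin 5)) k
    have dff : DiophFn (fun w : Fin2 n ⊕ (ι ⊕ Fin 5) → ℕ => f (w ∘ Sum.inl)) :=
      reindex_diophFn Sum.inl df
    refine Dioph.inter (forall_fin_dioph fun i => le_dioph (dp _) (dp _)) ?_
    refine Dioph.inter (le_dioph dff (dp _)) ?_
    refine Dioph.inter (eq_dioph (dp _) (add_dioph (add_dioph (pow_dioph (add_dioph (dp _) (dc 2))
      (dc e)) (dp _)) (dc 1))) ?_
    refine Dioph.inter (eq_dioph (dp _) (mul_dioph (factorial_dioph (dp _))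
      (factorial_dioph (dp _)))) ?_
    refine Dioph.inter (eq_dioph (dp _) (choose_dioph (add_dioph (dp _) dff) dff)) ?_
    refine Dioph.inter (dvd_dioph (dp _) (add_dioph (add_dioph (dp _) (dc 1)) (dp _))) ?_
    refine Dioph.inter (forall_fin_dioph fun i => dvd_dioph (dp _)
      (choose_dioph (dp _) (add_dioph (dp _) (dc 1)))) ?_
    exact dvd_dioph (dp _) (abs_poly_dioph _)
  refine (ex_dioph key).ext fun v => ?_
  have hr : ∀ x : ι ⊕ Fin 5 → ℕ, (Sum.elim v x) ∘ r
      = Sum.elim (Vector3.cons (x (Sum.inr 1)) v) (x ∘ Sum.inl) := by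
    intro x
    funext i
    rcases i with i | i
    · cases i with
      | fz => rfl
      | fs i => rfl
    · rfl
  refine Iff.trans ?_ (hcore v).symm
  constructor
  · rintro ⟨x, h1, h2, h3, h4, h5, h6, h7, h8⟩
    refine ⟨x ∘ Sum.inl, x (Sum.inr 0), x (Sum.inr 1), x (Sum.inr 2), x (Sum.inr 3),
      x (Sum.inr 4), h1, h2, h3, h4, h5, h6, h7, ?_⟩
    rw [Poly.map_apply, hr] at h8
    exact Int.natCast_dvd.2 h8
  · rintro ⟨A, u, K, B, N, M, h1, h2, h3, h4, h5, h6, h7, h8⟩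
    refine ⟨Sum.elim A ![u, K, B, N, M], h1, h2, h3, h4, h5, h6, h7, ?_⟩
    rw [Poly.map_apply, hr]
    exact Int.natCast_dvd.1 h8

section
open Dioph Fin2 Vector3

theorem pair_dioph {α : Type} {f g : (α → ℕ) → ℕ} (df : DiophFn f) (dg : DiophFn g) :
    DiophFn fun v => Nat.pair (f v) (g v) := by
  refine diophFn_comp2 df dg ?_
  rw [diophFn_vec]
  have h : Dioph {v : Vector3 ℕ 3 | (v &1 < v &2 ∧ v &2 * v &2 + v &1 = v &0) ∨
      (v &2 ≤ v &1 ∧ v &1 * v &1 + v &1 + v &2 = v &0)} :=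
    ((D&1 D< D&2) D∧ (D&2 D* D&2 D+ D&1 D= D&0)) D∨
      ((D&2 D≤ D&1) D∧ (D&1 D* D&1 D+ D&1 D+ D&2 D= D&0))
  refine h.ext fun v => ?_
  change _ ↔ Nat.pair (v &1) (v &2) = v &0
  change (_ ∨ _) ↔ _
  rw [Nat.pair]
  split_ifs with hlt
  · constructor
    · rintro (h | h)
      · exact h.2
      · omega
    · intro h; exact Or.inl ⟨hlt, h⟩
  · constructor
    · rintro (h | h)
      · omega
      · exact h.2
    · intro h; exact Or.inr ⟨by omega, h⟩

theorem unpair_dioph {α : Type} {f : (α → ℕ) → ℕ} (df : DiophFn f) :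
    DiophFn (fun v => (f v).unpair.1) ∧ DiophFn (fun v => (f v).unpair.2) := by
  constructor
  · have h : DiophFn fun v : Vector3 ℕ 1 => (v &0).unpair.1 := by
      rw [diophFn_vec]
      have h : Dioph {v : Vector3 ℕ 2 | ∃ y, Nat.pair (v &0) y = v &1} :=
        (D∃) 2 <| pair_dioph (D&1) (D&0) D= D&2
      refine h.ext fun v => ?_
      change _ ↔ (v &1).unpair.1 = v &0
      constructor
      · rintro ⟨y, hy⟩; rw [← hy]; simp
      · intro hy; exact ⟨(v &1).unpair.2, by rw [← hy]; simp⟩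
    exact diophFn_comp h [f] df
  · have h : DiophFn fun v : Vector3 ℕ 1 => (v &0).unpair.2 := by
      rw [diophFn_vec]
      have h : Dioph {v : Vector3 ℕ 2 | ∃ y, Nat.pair y (v &0) = v &1} :=
        (D∃) 2 <| pair_dioph (D&0) (D&1) D= D&2
      refine h.ext fun v => ?_
      change _ ↔ (v &1).unpair.2 = v &0
      constructor
      · rintro ⟨y, hy⟩; rw [← hy]; simp
      · intro hy; exact ⟨(v &1).unpair.1, by rw [← hy]; simp⟩
    exact diophFn_comp h [f] df

theorem beta_dioph {α : Type} {f g : (α → ℕ) → ℕ} (df : DiophFn f) (dg : DiophFn g) :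
    DiophFn fun v => Nat.beta (f v) (g v) :=
  (unpair_dioph df).1 D% ((dg D+ D.1) D* (unpair_dioph df).2 D+ D.1)

theorem exists_beta (a : ℕ → ℕ) (n : ℕ) : ∃ c, ∀ i ≤ n, Nat.beta c i = a i := by
  refine ⟨Nat.unbeta ((List.range (n + 1)).map a), fun i hi => ?_⟩
  have := Nat.beta_unbeta_coe ((List.range (n + 1)).map a) ⟨i, by simp; omega⟩
  simpa using this

theorem mem_prec_iff (f g : ℕ →. ℕ) (a n y : ℕ) :
    y ∈ (Nat.rec (f a) (fun y IH => do let i ← IH; g (Nat.pair a (Nat.pair y i))) n : Part ℕ) ↔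
    ∃ s : ℕ → ℕ, s 0 ∈ f a ∧ (∀ i < n, s (i + 1) ∈ g (Nat.pair a (Nat.pair i (s i)))) ∧
      s n = y := by
  induction n generalizing y with
  | zero =>
    constructor
    · intro h; exact ⟨fun _ => y, h, by simp, rfl⟩
    · rintro ⟨s, h, _, rfl⟩; exact h
  | succ n ih =>
    simp only [Part.bind_eq_bind, Part.mem_bind_iff]
    constructor
    · rintro ⟨z, hz, hy⟩
      obtain ⟨s, h0, h1, h2⟩ := (ih z).1 hz
      refine ⟨fun i => if i ≤ n then s i else y, by simpa using h0, ?_, by simp⟩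
      intro i hi
      rcases Nat.lt_succ_iff_lt_or_eq.1 hi with h | h
      · have e1 : i + 1 ≤ n := h
        have e2 : i ≤ n := by omega
        simp only [e1, e2, if_true]
        exact h1 i h
      · subst h
        simpa [h2] using hy
    · rintro ⟨s, h0, h1, h2⟩
      refine ⟨s n, (ih _).2 ⟨s, h0, fun i hi => h1 i (by omega), rfl⟩, ?_⟩
      rw [← h2]; exact h1 n (by omega)

theorem partrec_dioph {f : ℕ →. ℕ} (hf : Nat.Partrec f) :
    Dioph {v : Vector3 ℕ 2 | v &1 ∈ f (v &0)} := by
  induction hf with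
  | zero =>
    refine (D&1 D= D.0).ext fun v => ?_
    exact Part.mem_some_iff.symm
  | succ =>
    refine (D&1 D= D&0 D+ D.1).ext fun v => ?_
    exact Part.mem_some_iff.symm
  | left =>
    refine (D&1 D= (unpair_dioph (D&0)).1).ext fun v => ?_
    exact Part.mem_some_iff.symm
  | right =>
    refine (D&1 D= (unpair_dioph (D&0)).2).ext fun v => ?_
    exact Part.mem_some_iff.symm
  | @pair f g _ _ hf hg =>
    have h1 : Dioph {v : Vector3 ℕ 2 | (v &1).unpair.1 ∈ f (v &0)} :=
      dioph_comp2 (S := fun x y => y ∈ f x) (D&0) (unpair_dioph (D&1)).1 hf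
    have h2 : Dioph {v : Vector3 ℕ 2 | (v &1).unpair.2 ∈ g (v &0)} :=
      dioph_comp2 (S := fun x y => y ∈ g x) (D&0) (unpair_dioph (D&1)).2 hg
    refine (h1 D∧ h2).ext fun v => ?_
    change ((v &1).unpair.1 ∈ f (v &0) ∧ (v &1).unpair.2 ∈ g (v &0)) ↔
      v &1 ∈ (Nat.pair <$> f (v &0) <*> g (v &0))
    generalize v &1 = y, v &0 = x
    simp only [Seq.seq, Part.map_eq_map, Part.mem_bind_iff, Part.mem_map_iff]
    constructor
    · rintro ⟨h1, h2⟩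
      exact ⟨_, ⟨_, h1, rfl⟩, _, h2, by simp⟩
    · rintro ⟨_, ⟨a, ha, rfl⟩, b, hb, h⟩
      rw [← h]
      simpa using ⟨ha, hb⟩
  | @comp f g _ _ hf hg =>
    have h1 : Dioph {v : Vector3 ℕ 3 | v &0 ∈ g (v &1)} :=
      dioph_comp2 (S := fun x y => y ∈ g x) (D&1) (D&0) hg
    have h2 : Dioph {v : Vector3 ℕ 3 | v &2 ∈ f (v &0)} :=
      dioph_comp2 (S := fun x y => y ∈ f x) (D&0) (D&2) hf
    refine ((D∃) 2 (h1 D∧ h2)).ext fun v => ?_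
    change (∃ x, x ∈ g (v &0) ∧ v &1 ∈ f x) ↔ v &1 ∈ (g (v &0)).bind f
    exact Part.mem_bind_iff.symm
  | @prec f g _ _ hf hg =>
    have h1 : Dioph {v : Vector3 ℕ 3 | Nat.beta (v &0) 0 ∈ f (v &1).unpair.1} :=
      dioph_comp2 (S := fun x y => y ∈ f x) (unpair_dioph (D&1)).1 (beta_dioph (D&0) (D.0)) hf
    have h2 : Dioph {v : Vector3 ℕ 4 | Nat.beta (v &1) (v &0 + 1) ∈
        g (Nat.pair (v &2).unpair.1 (Nat.pair (v &0) (Nat.beta (v &1) (v &0))))} :=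
      dioph_comp2 (S := fun x y => y ∈ g x) (pair_dioph (unpair_dioph (D&2)).1 (pair_dioph (D&0)
        (beta_dioph (D&1) (D&0)))) (beta_dioph (D&1) (D&0 D+ D.1)) hg
    have h3 := ball_dioph h2 (unpair_dioph (D&1)).2
    have h4 : Dioph {v : Vector3 ℕ 3 | Nat.beta (v &0) (v &1).unpair.2 = v &2} :=
      (beta_dioph (D&0) (unpair_dioph (D&1)).2) D= D&2
    refine ((D∃) 2 (h1 D∧ h3 D∧ h4)).ext fun v => ?_
    refine Iff.trans ?_ (mem_prec_iff f g (v &0).unpair.1 (v &0).unpair.2 (v &1)).symm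
    constructor
    · rintro ⟨c, h1, h3, h4⟩
      exact ⟨fun i => Nat.beta c i, h1, h3, h4⟩
    · rintro ⟨s, h1, h3, h4⟩
      obtain ⟨c, hc⟩ := exists_beta s (v &0).unpair.2
      refine ⟨c, ?_, ?_, ?_⟩
      · change Nat.beta c 0 ∈ f (v &0).unpair.1
        rw [hc 0 (by omega)]; exact h1
      · intro i hi
        change i < (v &0).unpair.2 at hi
        change Nat.beta c (i + 1) ∈ g (Nat.pair (v &0).unpair.1 (Nat.pair i (Nat.beta c i)))
        rw [hc i (by omega), hc (i + 1) (by omega)]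
        exact h3 i hi
      · change Nat.beta c (v &0).unpair.2 = v &1
        rw [hc _ le_rfl]; exact h4
  | @rfind f _ hf =>
    have h1 : Dioph {v : Vector3 ℕ 2 | 0 ∈ f (Nat.pair (v &0) (v &1))} :=
      dioph_comp2 (S := fun x y => y ∈ f x) (pair_dioph (D&0) (D&1)) (D.0) hf
    have h2 : Dioph {v : Vector3 ℕ 4 | v &0 ∈ f (Nat.pair (v &2) (v &1))} :=
      dioph_comp2 (S := fun x y => y ∈ f x) (pair_dioph (D&2) (D&1)) (D&0) hf
    have h3 := ball_dioph ((D∃) 3 (h2 D∧ (D&0 D≠ D.0))) (D&1)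
    refine (h1 D∧ h3).ext fun v => ?_
    refine Iff.trans ?_ Nat.mem_rfind.symm
    refine and_congr ?_ ?_
    · change 0 ∈ f (Nat.pair (v &0) (v &1)) ↔ _
      simp
    · change (∀ m < v &1, ∃ z, z ∈ f (Nat.pair (v &0) m) ∧ z ≠ 0) ↔ _
      simp

end

/-- Integer polynomial expressions. -/
inductive Ex (V : Type) : Type
  | one : Ex V
  | var : V → Ex V
  | plus : Ex V → Ex V → Ex V
  | minus : Ex V → Ex V → Ex V
  | times : Ex V → Ex V → Ex V

namespace Ex
variable {V : Type}

/-- Evaluation of an expression. -/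
def eval (env : V → ℤ) : Ex V → ℤ
  | one => 1
  | var i => env i
  | plus a b => eval env a + eval env b
  | minus a b => eval env a - eval env b
  | times a b => eval env a * eval env b

open Classical in
/-- The subterms of an expression. -/
noncomputable def subs : Ex V → Finset (Ex V)
  | one => {one}
  | var i => {var i}
  | plus a b => insert (plus a b) (subs a ∪ subs b)
  | minus a b => insert (minus a b) (subs a ∪ subs b)
  | times a b => insert (times a b) (subs a ∪ subs b)

theorem self_mem_subs (e : Ex V) : e ∈ subs e := by
  cases e <;> simp [subs]

/-- A set of expressions closed under subterms. -/
def Closed (T : Finset (Ex V)) : Prop :=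
  (∀ a b, plus a b ∈ T → a ∈ T ∧ b ∈ T) ∧ (∀ a b, minus a b ∈ T → a ∈ T ∧ b ∈ T) ∧
    (∀ a b, times a b ∈ T → a ∈ T ∧ b ∈ T)

open Classical in
theorem Closed.union {S T : Finset (Ex V)} (hS : Closed S) (hT : Closed T) : Closed (S ∪ T) := by
  obtain ⟨h1, h2, h3⟩ := hS
  obtain ⟨k1, k2, k3⟩ := hT
  refine ⟨fun a b h => ?_, fun a b h => ?_, fun a b h => ?_⟩ <;>
    simp only [Finset.mem_union] at h ⊢ <;> grind

open Classical in
theorem closed_subs (e : Ex V) : Closed (subs e) := by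
  have ins : ∀ (c a b : Ex V), (c = plus a b ∨ c = minus a b ∨ c = times a b) →
      Closed (subs a) → Closed (subs b) → Closed (insert c (subs a ∪ subs b)) := by
    intro c a b hc ha hb
    obtain ⟨h1, h2, h3⟩ := ha.union hb
    have sa := self_mem_subs a
    have sb := self_mem_subs b
    refine ⟨fun a' b' h => ?_, fun a' b' h => ?_, fun a' b' h => ?_⟩ <;>
      rcases Finset.mem_insert.1 h with h | h
    · subst h
      simp only [plus.injEq, reduceCtorEq, or_false] at hc
      obtain ⟨rfl, rfl⟩ := hc
      simp [sa, sb]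
    · exact ⟨Finset.mem_insert_of_mem (h1 _ _ h).1, Finset.mem_insert_of_mem (h1 _ _ h).2⟩
    · subst h
      simp only [minus.injEq, reduceCtorEq, or_false, false_or] at hc
      obtain ⟨rfl, rfl⟩ := hc
      simp [sa, sb]
    · exact ⟨Finset.mem_insert_of_mem (h2 _ _ h).1, Finset.mem_insert_of_mem (h2 _ _ h).2⟩
    · subst h
      simp only [times.injEq, reduceCtorEq, false_or] at hc
      obtain ⟨rfl, rfl⟩ := hc
      simp [sa, sb]
    · exact ⟨Finset.mem_insert_of_mem (h3 _ _ h).1, Finset.mem_insert_of_mem (h3 _ _ h).2⟩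
  induction e with
  | one => simp [Closed, subs]
  | var i => simp [Closed, subs]
  | plus a b ha hb => exact ins _ a b (by simp) ha hb
  | minus a b ha hb => exact ins _ a b (by simp) ha hb
  | times a b ha hb => exact ins _ a b (by simp) ha hb

/-- The numeral `h`, in unary. -/
def num : ℕ → Ex V
  | 0 => minus one one
  | h + 1 => plus (num h) one

theorem eval_num (env : V → ℤ) (h : ℕ) : eval env (num h) = h := by
  induction h with
  | zero => simp [num, eval]
  | succ h ih => simp [num, eval, ih]

open Classical in
theorem card_subs_num (h : ℕ) : (subs (num h : Ex V)).card ≤ h + 2 := by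
  have hsub : ∀ h : ℕ, subs (num h : Ex V) ⊆ insert one ((Finset.range (h + 1)).image num) := by
    intro h
    induction h with
    | zero => intro x; simp [num, subs]; tauto
    | succ h ih =>
      intro x hx
      simp only [num, subs, Finset.mem_insert, Finset.mem_union, Finset.mem_singleton] at hx
      rcases hx with rfl | hx | rfl
      · exact Finset.mem_insert_of_mem (Finset.mem_image.2 ⟨h + 1, by simp, rfl⟩)
      · have := ih hx
        simp only [Finset.mem_insert, Finset.mem_image, Finset.mem_range] at this ⊢
        rcases this with h1 | ⟨k, hk, h1⟩
        · exact Or.inl h1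
        · exact Or.inr ⟨k, by omega, h1⟩
      · simp
  calc _ ≤ _ := Finset.card_le_card (hsub h)
    _ ≤ ((Finset.range (h + 1)).image (num (V := V))).card + 1 := Finset.card_insert_le _ _
    _ ≤ (h + 1) + 1 := by
      have := Finset.card_image_le (s := Finset.range (h + 1)) (f := num (V := V))
      simp only [Finset.card_range] at this
      omega

/-- A numeral for `n` with about `n / 2` subterms. -/
def half (n : ℕ) : Ex V := plus (plus (num (n / 2)) (num (n / 2))) (num (n % 2))

theorem eval_half (env : V → ℤ) (n : ℕ) : eval env (half n) = n := by
  simp only [half, eval, eval_num]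
  omega

open Classical in
theorem card_subs_half (n : ℕ) : (subs (half n : Ex V)).card ≤ n / 2 + 7 := by
  have h1 := card_subs_num (V := V) (n / 2)
  have h2 := card_subs_num (V := V) (n % 2)
  simp only [half, subs, Finset.union_self]
  refine (Finset.card_insert_le _ _).trans ?_
  have h3 := Finset.card_union_le (insert (plus (num (n / 2)) (num (n / 2)))
    (subs (num (n / 2) : Ex V))) (subs (num (n % 2) : Ex V))
  have h4 := Finset.card_insert_le (plus (num (n / 2)) (num (n / 2))) (subs (num (n / 2) : Ex V))
  omega

open Classical in
theorem tuple_of_closed (T : Finset (Ex V)) (hT : Closed T) (v0 : V) (env : V → ℤ) (n : ℕ)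
    (hn : T.card + 1 ≤ n) :
    ∃ x : Fin n → ℤ, (∀ i : Fin n, (i : ℕ) = 0 → x i = env v0) ∧
      ∀ y : Fin n → ℤ, ((∀ i : Fin n, x i = 1 → y i = 1) ∧
           (∀ i j k : Fin n, x i + x j = x k → y i + y j = y k) ∧
           (∀ i j k : Fin n, x i * x j = x k → y i * y j = y k)) →
        ∃ env' : V → ℤ, (∀ i : Fin n, (i : ℕ) = 0 → y i = env' v0) ∧
          ∀ e ∈ T, eval env e = 0 → eval env' e = 0 := by
  let g : Fin n → Ex V := fun i => (var v0 :: T.toList).getD i (var v0)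
  have hg0 : g ⟨0, by omega⟩ = var v0 := rfl
  have hpos : ∀ e, ∃ i : Fin n, (e ∈ T → g i = e) ∧ (e = var v0 → (i : ℕ) = 0) := by
    intro e
    by_cases he : e = var v0
    · exact ⟨⟨0, by omega⟩, fun _ => he ▸ hg0, fun _ => rfl⟩
    · by_cases heT : e ∈ T
      · obtain ⟨i, hi, h⟩ := List.getElem_of_mem (Finset.mem_toList.2 heT)
        rw [Finset.length_toList] at hi
        refine ⟨⟨i + 1, by omega⟩, fun _ => ?_, fun h => absurd h he⟩
        simp only [g, List.getD_cons_succ]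
        rw [List.getD_eq_getElem _ _ (by simpa using hi), h]
      · exact ⟨⟨0, by omega⟩, fun h => absurd h heT, fun h => absurd h he⟩
  choose pos hp hp0 using hpos
  refine ⟨fun i => eval env (g i), fun i hi => ?_, ?_⟩
  · have : i = ⟨0, by omega⟩ := Fin.ext hi
    change eval env (g i) = env v0
    rw [this, hg0, eval]
  · rintro y ⟨h1, h2, h3⟩
    have key : ∀ e ∈ T, y (pos e) = eval (fun v => y (pos (var v))) e := by
      intro e
      induction e with
      | one => intro h; exact h1 _ (by simp only [hp _ h, eval])
      | var i => intro _; rfl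
      | plus a b ha hb =>
        intro h
        obtain ⟨ta, tb⟩ := hT.1 _ _ h
        rw [eval, ← ha ta, ← hb tb]
        exact (h2 _ _ _ (by simp only [hp _ h, hp _ ta, hp _ tb, eval])).symm
      | minus a b ha hb =>
        intro h
        obtain ⟨ta, tb⟩ := hT.2.1 _ _ h
        rw [eval, ← ha ta, ← hb tb]
        have := h2 (pos (minus a b)) (pos b) (pos a)
          (by simp only [hp _ h, hp _ ta, hp _ tb, eval]; ring)
        omega
      | times a b ha hb =>
        intro h
        obtain ⟨ta, tb⟩ := hT.2.2 _ _ h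
        rw [eval, ← ha ta, ← hb tb]
        exact (h3 _ _ _ (by simp only [hp _ h, hp _ ta, hp _ tb, eval])).symm
    refine ⟨fun v => y (pos (var v)), fun i hi => ?_, fun e he h0 => ?_⟩
    · have : i = pos (var v0) := Fin.ext (by rw [hi, hp0 _ rfl])
      rw [this]
    · rw [← key e he]
      have := h2 (pos e) (pos e) (pos e) (by simp only [hp _ he, h0]; rfl)
      omega

theorem exists_const (n : ℤ) : ∃ e : Ex V, ∀ env, eval env e = n := by
  obtain ⟨a, rfl | rfl⟩ := n.eq_nat_or_neg
  · exact ⟨num a, fun env => eval_num env a⟩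
  · exact ⟨minus (num 0) (num a), fun env => by simp [eval, eval_num]⟩

theorem exists_of_poly {σ : Type} (sq : σ → Ex V) (hsq : ∀ env j, 0 ≤ eval env (sq j))
    (p : Poly σ) : ∃ e : Ex V, ∀ env, eval env e = p (fun j => (eval env (sq j)).toNat) := by
  induction p using Poly.induction with
  | H1 i => exact ⟨sq i, fun env => by simp [hsq env i]⟩
  | H2 n => exact exists_const n
  | H3 f g hf hg =>
    obtain ⟨a, ha⟩ := hf
    obtain ⟨b, hb⟩ := hg
    exact ⟨minus a b, fun env => by simp [eval, ha, hb]⟩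
  | H4 f g hf hg =>
    obtain ⟨a, ha⟩ := hf
    obtain ⟨b, hb⟩ := hg
    exact ⟨times a b, fun env => by simp [eval, ha, hb]⟩

end Ex

open Ex Dioph in
theorem exists_expr (f : ℕ → ℕ) (hf : Computable f) :
    ∃ (V : Type) (v0 v1 : V) (P : Ex V),
      (∀ (env : V → ℤ) (n : ℕ), env v1 = n → eval env P = 0 → env v0 = f n) ∧
      ∀ n : ℕ, ∃ env : V → ℤ, env v0 = f n ∧ env v1 = n ∧ eval env P = 0 := by
  have hd := partrec_dioph (Partrec.nat_iff.1 hf)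
  obtain ⟨β, p, hp⟩ := hd
  let σ := Fin2 2 ⊕ β
  let V := Fin 2 ⊕ (σ × Fin 4)
  let t : σ → Fin 4 → Ex V := fun j i => times (var (Sum.inr (j, i))) (var (Sum.inr (j, i)))
  let sq : σ → Ex V := fun j => plus (plus (t j 0) (t j 1)) (plus (t j 2) (t j 3))
  have hsq : ∀ env j, 0 ≤ eval env (sq j) := by
    intro env j
    simp only [sq, t, eval]
    exact add_nonneg (add_nonneg (mul_self_nonneg _) (mul_self_nonneg _))
      (add_nonneg (mul_self_nonneg _) (mul_self_nonneg _))
  obtain ⟨e, he⟩ := exists_of_poly sq hsq p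
  let a : Ex V := minus (var (Sum.inl 0)) (sq (Sum.inl &1))
  let b : Ex V := minus (var (Sum.inl 1)) (sq (Sum.inl &0))
  refine ⟨V, Sum.inl 0, Sum.inl 1, plus (times e e) (plus (times a a) (times b b)), ?_, ?_⟩
  · intro env n hn h0
    simp only [eval] at h0
    have z1 : eval env e = 0 := by nlinarith [mul_self_nonneg (eval env e), mul_self_nonneg (eval env a), mul_self_nonneg (eval env b)]
    have z2 : eval env a = 0 := by nlinarith [mul_self_nonneg (eval env e), mul_self_nonneg (eval env a), mul_self_nonneg (eval env b)]
    have z3 : eval env b = 0 := by nlinarith [mul_self_nonneg (eval env e), mul_self_nonneg (eval env a), mul_self_nonneg (eval env b)]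
    rw [he] at z1
    let w : σ → ℕ := fun j => (eval env (sq j)).toNat
    have hw : w = Sum.elim (w ∘ Sum.inl) (w ∘ Sum.inr) := (Sum.elim_comp_inl_inr w).symm
    have hm := (hp (w ∘ Sum.inl)).2 ⟨w ∘ Sum.inr, by rw [← hw]; exact z1⟩
    have hm' : w (Sum.inl &1) = f (w (Sum.inl &0)) := Part.mem_some_iff.1 hm
    have c1 : (w (Sum.inl &1) : ℤ) = eval env (sq (Sum.inl &1)) := Int.toNat_of_nonneg (hsq _ _)
    have c0 : (w (Sum.inl &0) : ℤ) = eval env (sq (Sum.inl &0)) := Int.toNat_of_nonneg (hsq _ _)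
    simp only [a, b, eval] at z2 z3
    have c2 : w (Sum.inl &0) = n := by
      have : (w (Sum.inl &0) : ℤ) = n := by rw [c0, ← hn]; linarith
      exact_mod_cast this
    rw [c2] at hm'
    rw [← hm', c1]; linarith
  · intro n
    let v : Vector3 ℕ 2 := Vector3.cons n (Vector3.cons (f n) Vector3.nil)
    obtain ⟨s, hs⟩ := (hp v).1 (Part.mem_some_iff.2 rfl)
    let w : σ → ℕ := Sum.elim v s
    have h4 : ∀ j, ∃ r : Fin 4 → ℕ, r 0 ^ 2 + r 1 ^ 2 + r 2 ^ 2 + r 3 ^ 2 = w j := by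
      intro j
      obtain ⟨a, b, c, d, h⟩ := Nat.sum_four_squares (w j)
      exact ⟨![a, b, c, d], h⟩
    choose r hr using h4
    let env : V → ℤ := Sum.elim ![(f n : ℤ), (n : ℤ)] (fun q => (r q.1 q.2 : ℤ))
    have hsw : ∀ j, eval env (sq j) = w j := by
      intro j
      rw [← hr j]
      simp only [sq, t, eval, env, Sum.elim_inr]
      push_cast; ring
    refine ⟨env, rfl, rfl, ?_⟩
    have z1 : eval env e = 0 := by
      rw [he, ← hs]
      congr 1
      funext j
      rw [hsw]; rfl
    have z2 : eval env a = 0 := by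
      simp only [a, eval, hsw]
      exact sub_self (f n : ℤ)
    have z3 : eval env b = 0 := by
      simp only [b, eval, hsw]
      exact sub_self (n : ℤ)
    simp only [eval, z1, z2, z3]; rfl

end RigidTuple

open RigidTuple RigidTuple.Ex


/-- For every computable `f : ℕ → ℕ` there is a positive integer `m` such that for every
`n ≥ m` there is an integer tuple `(x_1, …, x_n)` with `x_1 = f n` which is "rigid":
any tuple `(y_1, …, y_n)` satisfying the same basic relations (`x_i = 1 → y_i = 1`,
`x_i + x_j = x_k → y_i + y_j = y_k`, `x_i · x_j = x_k → y_i · y_j = y_k`)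
has `y_1 = x_1`. -/
theorem rigid_tuple_with_first_coordinate (f : ℕ → ℕ) (hf : Computable f) :
    ∃ m : ℕ, 0 < m ∧ ∀ n : ℕ, m ≤ n →
      ∃ x : Fin n → ℤ,
        (∀ i : Fin n, (i : ℕ) = 0 → x i = f n) ∧
        ∀ y : Fin n → ℤ,
          ((∀ i : Fin n, x i = 1 → y i = 1) ∧
           (∀ i j k : Fin n, x i + x j = x k → y i + y j = y k) ∧
           (∀ i j k : Fin n, x i * x j = x k → y i * y j = y k)) →
          ∀ i : Fin n, (i : ℕ) = 0 → x i = y i := by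
  classical
  obtain ⟨V, v0, v1, P, hP1, hP2⟩ := exists_expr f hf
  refine ⟨2 * (subs P).card + 40, by omega, fun n hn => ?_⟩
  obtain ⟨env, e0, e1, eP⟩ := hP2 n
  let Q : Ex V := minus (var v1) (half n)
  have hcard : (subs P ∪ subs Q).card + 1 ≤ n := by
    have h1 := Finset.card_union_le (subs P) (subs Q)
    have h2 := Finset.card_insert_le Q (subs (var v1) ∪ subs (half n))
    have h3 := Finset.card_union_le (subs (var v1)) (subs (half n))
    have h4 := card_subs_half (V := V) n
    have h5 : (subs (var v1)).card = 1 := by simp [subs]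
    have h6 : subs Q = insert Q (subs (var v1) ∪ subs (half n)) := by simp only [Q, subs]
    rw [← h6] at h2
    omega
  obtain ⟨x, hx0, hx⟩ := tuple_of_closed (subs P ∪ subs Q)
    ((closed_subs P).union (closed_subs Q)) v0 env n hcard
  refine ⟨x, fun i hi => (hx0 i hi).trans e0, fun y hy i hi => ?_⟩
  obtain ⟨env', hy0, hz⟩ := hx y hy
  have zP := hz P (Finset.mem_union_left _ (self_mem_subs P)) eP
  have zQ := hz Q (Finset.mem_union_right _ (self_mem_subs Q))
    (by simp only [Q, eval, eval_half, e1, sub_self])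
  simp only [Q, eval, eval_half] at zQ
  rw [hx0 i hi, hy0 i hi, e0, hP1 env' n (by linarith) zP]
end

section
/- Let n ≥ 2 and let (x_1,...,x_n) = (2^(2^(n-1)), 2^(2^(n-2)), 2^(2^(n-3)), ..., 16, 4, 2), i.e. x_i = 2^(2^(n-i)) for i ∈ {1,...,n}. If integers y_1,...,y_n satisfy: for all i,j,k ∈ {1,...,n}, x_i + x_j = x_k implies y_i + y_j = y_k, and x_i · x_j = x_k implies y_i · y_j = y_k, then either (y_1,...,y_n) = (0,...,0) or (y_1,...,y_n) = (x_1,...,x_n). -/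
/-- For `n ≥ 2` and the tuple `(x_1, …, x_n) = (2^(2^(n-1)), 2^(2^(n-2)), …, 16, 4, 2)`,
i.e. `x_i = 2^(2^(n-i))`, any integers `y_1, …, y_n` preserving all additive and
multiplicative relations among the `x_i` form either the zero tuple or the tuple
`(x_1, …, x_n)` itself. (Index `i : Fin n` corresponds to `x_{i+1} = 2^(2^(n-1-i))`.) -/
theorem doubling_tuple_rigidity (n : ℕ) (hn : 2 ≤ n) (x y : Fin n → ℤ)
    (hx : ∀ i : Fin n, x i = 2 ^ 2 ^ (n - 1 - (i : ℕ)))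
    (hadd : ∀ i j k : Fin n, x i + x j = x k → y i + y j = y k)
    (hmul : ∀ i j k : Fin n, x i * x j = x k → y i * y j = y k) :
    (∀ i : Fin n, y i = 0) ∨ (∀ i : Fin n, y i = x i) := by
  have key : ∀ m : ℕ, ∀ hm : m < n,
      y ⟨n - 1 - m, by omega⟩ = (y ⟨n - 1, by omega⟩) ^ 2 ^ m := by
    intro m
    induction m with
    | zero => intro hm; simp
    | succ m ih =>
      intro hm
      have h1 := hmul ⟨n - 1 - m, by omega⟩ ⟨n - 1 - m, by omega⟩ ⟨n - 1 - (m + 1), by omega⟩ (by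
        rw [hx, hx]
        have e1 : n - 1 - (n - 1 - m) = m := by omega
        have e2 : n - 1 - (n - 1 - (m + 1)) = m + 1 := by omega
        simp only [e1, e2]
        rw [pow_succ 2 m, pow_mul, sq])
      rw [← h1, ih (by omega), pow_succ 2 m, pow_mul, sq]
  have hall : ∀ i : Fin n, y i = (y ⟨n - 1, by omega⟩) ^ 2 ^ (n - 1 - (i : ℕ)) := by
    intro i
    have hi := i.isLt
    have h := key (n - 1 - (i : ℕ)) (by omega)
    have e : (⟨n - 1 - (n - 1 - (i : ℕ)), by omega⟩ : Fin n) = i := by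
      apply Fin.ext
      show n - 1 - (n - 1 - (i : ℕ)) = (i : ℕ)
      omega
    rw [e] at h
    exact h
  have ha := hadd ⟨n - 1, by omega⟩ ⟨n - 1, by omega⟩ ⟨n - 1 - 1, by omega⟩ (by
    rw [hx, hx]
    have e1 : n - 1 - (n - 1) = 0 := by omega
    have e2 : n - 1 - (n - 1 - 1) = 1 := by omega
    simp only [e1, e2]
    norm_num)
  rw [key 1 (by omega)] at ha
  generalize y ⟨n - 1, by omega⟩ = a at ha hall
  have h0 : a * (a - 2) = 0 := by
    simp only [pow_one] at ha
    linarith [ha, sq a]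
  rcases mul_eq_zero.mp h0 with h | h
  · left
    intro i
    rw [hall i, h]
    exact zero_pow (by positivity)
  · right
    intro i
    have h2 : a = 2 := by linarith
    rw [hall i, hx i, h2]
end
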